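/- arXiv:1403.5389 — 16 statements merged into one kernel-verified Lean document; each statement's English description precedes it below -/
import Mathlib

section
/- Let (L, ⪯) be a finite meet semilattice, let x ∈ L, and let C_L(x) = {y ∈ L : x covers y}. Suppose C_L(x) is nonempty and let ξ_L(x) be the meet of all elements of C_L(x). If z ∈ L does not satisfy ξ_L(x) ⪯ z ⪯ x, then μ_L(z, x) = 0. -/
open IncidenceAlgebra

/-- Let `L` be a finite meet semilattice, `x ∈ L`, and let `C` be the set of elements
covered by `x`.  If `C` is nonempty with meet `ξ`, and `z` does not satisfy
`ξ ≤ z ≤ x`, then `μ_L (z, x) = 0`. -/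
theorem stmt_1 {L : Type*} [SemilatticeInf L] [Fintype L] [DecidableEq L]
    [LocallyFiniteOrder L] (x : L) (C : Finset L) (hC : ∀ y, y ∈ C ↔ y ⋖ x)
    (hne : C.Nonempty) (z : L)
    (hz : ¬(C.inf' hne id ≤ z ∧ z ≤ x)) :
    mu ℤ z x = 0 := by
  classical
  have hξ : ∀ c ∈ C, C.inf' hne id ≤ c := fun c hc => Finset.inf'_le id hc
  have hξx : C.inf' hne id ≤ x := by
    obtain ⟨c, hc⟩ := hne
    exact (hξ c hc).trans ((hC c).1 hc).le
  generalize C.inf' hne id = ξ at *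
  have wf : WellFounded (fun a b : L => a > b) := wellFounded_gt
  induction z using wf.induction with
  | _ z ih =>
  by_cases hzx : z ≤ x
  swap
  · exact apply_eq_zero_of_not_le hzx _
  have hξz : ¬ ξ ≤ z := fun h => hz ⟨h, hzx⟩
  have hlt : z < x := lt_of_le_of_ne hzx (by rintro rfl; exact hξz hξx)
  obtain ⟨c, hzc, hcx⟩ := exists_le_covBy_of_lt hlt
  have hξc := hξ c ((hC c).2 hcx)
  have hne' : (Finset.univ.filter (fun w => z ≤ w ∧ ξ ≤ w)).Nonempty :=
    ⟨c, by simp [hzc, hξc]⟩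
  obtain ⟨j, hj⟩ : ∃ j : L, ∀ w, j ≤ w ↔ (z ≤ w ∧ ξ ≤ w) := by
    refine ⟨(Finset.univ.filter (fun w => z ≤ w ∧ ξ ≤ w)).inf' hne' id, fun w => ⟨fun h => ⟨?_, ?_⟩, fun h => ?_⟩⟩
    · exact (Finset.le_inf' hne' id (fun b hb => (Finset.mem_filter.1 hb).2.1)).trans h
    · exact (Finset.le_inf' hne' id (fun b hb => (Finset.mem_filter.1 hb).2.2)).trans h
    · exact Finset.inf'_le id (Finset.mem_filter.2 ⟨Finset.mem_univ w, h⟩)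
  have hjx : j ≠ x := by
    rintro rfl
    exact absurd ((hj c).2 ⟨hzc, hξc⟩) (not_le_of_gt hcx.lt)
  have hsum := sum_Icc_mu_left (𝕜 := ℤ) j x
  rw [if_neg hjx] at hsum
  rw [mu_eq_neg_sum_Ioc_of_ne hlt.ne, neg_eq_zero, ← hsum]
  symm
  apply Finset.sum_subset
  · intro w hw
    rw [Finset.mem_Icc, hj] at hw
    rw [Finset.mem_Ioc]
    exact ⟨lt_of_le_of_ne hw.1.1 (by rintro rfl; exact hξz hw.1.2), hw.2⟩
  · intro w hw hw'
    rw [Finset.mem_Ioc] at hw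
    rw [Finset.mem_Icc, hj] at hw'
    exact ih w hw.1 (fun h => hw' ⟨⟨hw.1.le, h.1⟩, h.2⟩)
end

section
/- Let (L, ⪯) be a finite meet semilattice and let z, x ∈ L with z < x. If μ_L(z, x) ≠ 0, then the set C = {y ∈ L : x covers y and z ⪯ y ⪯ x} is nonempty and z equals the meet of all elements of C. -/
open IncidenceAlgebra

theorem aux_mu {L : Type*} [SemilatticeInf L] [Fintype L] [DecidableEq L]
    [LocallyFiniteOrder L] (z x m : L) (hmx : m ≤ x)
    (hm : ∀ y, y ⋖ x → z ≤ y → m ≤ y) (w : L) :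
    z ≤ w → w < x → ¬ m ≤ w → mu ℤ w x = 0 := by
  classical
  induction w using WellFoundedGT.induction with
  | ind w ih =>
    intro hzw hwx hmw
    obtain ⟨c, hwc, hcx⟩ := exists_le_covBy_of_lt hwx
    rw [mu_eq_neg_sum_Ioc_of_ne hwx.ne, neg_eq_zero]
    let S := (Finset.Icc w x).filter (fun u => m ≤ u)
    have hS : S.Nonempty := ⟨x, by simp [S, hwx.le, hmx]⟩
    let j := S.inf' hS id
    have hwj : w ≤ j := Finset.le_inf' _ _ (fun b hb => by
      simp only [S, Finset.mem_filter, Finset.mem_Icc] at hb; exact hb.1.1)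
    have hmj : m ≤ j := Finset.le_inf' _ _ (fun b hb => by
      simp only [S, Finset.mem_filter] at hb; exact hb.2)
    have hj : ∀ u, w ≤ u → m ≤ u → u ≤ x → j ≤ u := fun u h1 h2 h3 =>
      Finset.inf'_le (f := id) (b := u) (by simp [S, h1, h2, h3])
    have hjx : j ≠ x :=
      ((hj c hwc (hm c hcx (hzw.trans hwc)) hcx.le).trans_lt hcx.lt).ne
    have hsum := sum_Icc_mu_left (𝕜 := ℤ) j x
    rw [if_neg hjx] at hsum
    rw [← hsum]
    symm
    apply Finset.sum_subset
    · intro u hu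
      rw [Finset.mem_Icc] at hu
      rw [Finset.mem_Ioc]
      refine ⟨lt_of_le_of_ne (hwj.trans hu.1) ?_, hu.2⟩
      rintro rfl
      exact hmw (hmj.trans hu.1)
    · intro u hu hu'
      rw [Finset.mem_Ioc] at hu
      have hmu : ¬ m ≤ u := fun h => hu' (Finset.mem_Icc.2 ⟨hj u hu.1.le h hu.2, hu.2⟩)
      refine ih u hu.1 (hzw.trans hu.1.le) (lt_of_le_of_ne hu.2 ?_) hmu
      rintro rfl
      exact hmu hmx

/-- Let `L` be a finite meet semilattice and `z < x` in `L`.  If `μ_L (z, x) ≠ 0`, then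
the set `C = {y | x covers y and z ≤ y ≤ x}` is nonempty and `z` is the meet of `C`. -/
theorem stmt_2 {L : Type*} [SemilatticeInf L] [Fintype L] [DecidableEq L]
    [LocallyFiniteOrder L] (z x : L) (hzx : z < x) (hmu : mu ℤ z x ≠ 0)
    (C : Finset L) (hC : ∀ y, y ∈ C ↔ y ⋖ x ∧ z ≤ y ∧ y ≤ x) :
    ∃ hne : C.Nonempty, z = C.inf' hne id := by
  obtain ⟨c, hzc, hcx⟩ := exists_le_covBy_of_lt hzx
  have hc : c ∈ C := (hC c).2 ⟨hcx, hzc, hcx.le⟩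
  refine ⟨⟨c, hc⟩, le_antisymm (Finset.le_inf' _ _ fun b hb => ((hC b).1 hb).2.1) ?_⟩
  by_contra h
  exact hmu (aux_mu z x _ ((Finset.inf'_le (f := id) hc).trans hcx.le)
    (fun y hy hzy => Finset.inf'_le (f := id) ((hC y).2 ⟨hy, hzy, hy.le⟩)) z le_rfl hzx h)
end

section
/- Let S = {x_1, …, x_8} be a GCD closed set of 8 distinct positive integers such that the LCM matrix [S] = [lcm(x_i, x_j)] (the 8×8 integer matrix with ij-entry lcm(x_i, x_j)) is singular, i.e. has determinant 0. Then the poset (S, |) of S under divisibility is order-isomorphic to the lattice of all subsets of a three-element set ordered by inclusion. -/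
open Finset in
theorem aux_E (x : Fin 8 → ℕ) (hpos : ∀ i, 0 < x i) (hinj : Function.Injective x) :
    (Matrix.of fun i j => if x j ∣ x i then (1 : ℚ) else 0).det ≠ 0 := by
  intro h
  obtain ⟨v, hv, hv0⟩ := Matrix.exists_mulVec_eq_zero_iff.mpr h
  apply hv
  have key : ∀ n, ∀ i, x i = n → v i = 0 := by
    intro n
    induction n using Nat.strong_induction_on with
    | _ n ih =>
      intro i hi
      have h1 := congrFun hv0 i
      simp only [Matrix.mulVec, dotProduct, Matrix.of_apply, Pi.zero_apply] at h1
      rw [Finset.sum_eq_single i] at h1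
      · simpa using h1
      · intro j _ hj
        by_cases hd : x j ∣ x i
        · have : x j < n := by
            rw [← hi]
            exact lt_of_le_of_ne (Nat.le_of_dvd (hpos i) hd) (fun h => hj (hinj h))
          rw [ih _ this j rfl]; simp
        · simp [hd]
      · simp
  funext i
  exact key _ i rfl

/-- Existence of the alpha vector with a vanishing coordinate. -/
theorem aux_alpha (x : Fin 8 → ℕ) (hpos : ∀ i, 0 < x i) (hinj : Function.Injective x)
    (hgcd : ∀ i j, ∃ k, x k = Nat.gcd (x i) (x j))
    (hdet : (Matrix.of fun i j => (Nat.lcm (x i) (x j) : ℤ)).det = 0) :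
    ∃ α : Fin 8 → ℚ, (∀ i, ∑ j, (if x j ∣ x i then α j else 0) = 1 / (x i : ℚ)) ∧
      ∃ k, α k = 0 := by
  have hE := aux_E x hpos hinj
  set E : Matrix (Fin 8) (Fin 8) ℚ := Matrix.of fun i j => if x j ∣ x i then (1 : ℚ) else 0
    with hEdef
  have hu : IsUnit E.det := isUnit_iff_ne_zero.mpr hE
  refine ⟨E⁻¹.mulVec (fun i => 1 / (x i : ℚ)), ?_⟩
  set α := E⁻¹.mulVec (fun i => 1 / (x i : ℚ)) with hα
  have h1 : ∀ i, ∑ j, (if x j ∣ x i then α j else 0) = 1 / (x i : ℚ) := by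
    intro i
    have : E.mulVec α = fun i => 1 / (x i : ℚ) := by
      rw [hα, Matrix.mulVec_mulVec, Matrix.mul_nonsing_inv _ hu, Matrix.one_mulVec]
    have := congrFun this i
    rw [← this]
    simp [Matrix.mulVec, dotProduct, hEdef]
  refine ⟨h1, ?_⟩
  by_contra! hne
  let D : Matrix (Fin 8) (Fin 8) ℚ := Matrix.diagonal fun i => (x i : ℚ)
  have hM : (Matrix.of fun i j => (Nat.lcm (x i) (x j) : ℤ)).map (Int.castRingHom ℚ)
      = D * (E * Matrix.diagonal α * E.transpose) * D := by
    ext i j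
    simp only [D, Matrix.mul_diagonal, Matrix.diagonal_mul, Matrix.map_apply, Matrix.of_apply]
    obtain ⟨k, hk⟩ := hgcd i j
    have h2 : (E * Matrix.diagonal α * E.transpose) i j = 1 / (x k : ℚ) := by
      rw [← h1 k, Matrix.mul_apply]
      refine Finset.sum_congr rfl fun l _ => ?_
      simp only [Matrix.mul_diagonal, Matrix.transpose_apply, hEdef, Matrix.of_apply, hk,
        Nat.dvd_gcd_iff]
      by_cases a : x l ∣ x i <;> by_cases b : x l ∣ x j <;> simp [a, b]
    rw [h2]
    have h3 : (x k : ℚ) ≠ 0 := by exact_mod_cast (hpos k).ne'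
    have h4 : (x k : ℚ) * (Nat.lcm (x i) (x j) : ℚ) = x i * x j := by
      rw [hk]; exact_mod_cast Nat.gcd_mul_lcm _ _
    simp only [eq_intCast, Int.cast_natCast]
    field_simp
    linarith
  have h5 := congrArg Matrix.det hM
  rw [← RingHom.mapMatrix_apply, ← RingHom.map_det, hdet] at h5
  simp only [D, Matrix.det_mul, Matrix.det_diagonal, Matrix.det_transpose, map_zero] at h5
  have hp : ∏ i, (x i : ℚ) ≠ 0 := Finset.prod_ne_zero_iff.mpr fun i _ => by
    exact_mod_cast (hpos i).ne'
  have hq : ∏ i, α i ≠ 0 := Finset.prod_ne_zero_iff.mpr fun i _ => hne i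
  exact (mul_ne_zero (mul_ne_zero hp (mul_ne_zero (mul_ne_zero hE hq) hE)) hp) h5.symm

/-- `y` is a maximal proper divisor of `t` in `S`. -/
def Coat (S : Finset ℕ) (t y : ℕ) : Prop :=
  y ∈ S ∧ y ∣ t ∧ y ≠ t ∧ ∀ z ∈ S, z ∣ t → z ≠ t → y ∣ z → z = y

def Bad (S : Finset ℕ) (t y : ℕ) : Prop :=
  ∃ a b, Coat S t a ∧ Coat S t b ∧ a ≠ y ∧ b ≠ y ∧ ¬ Nat.gcd y a ∣ Nat.gcd y b ∧
    ¬ Nat.gcd y b ∣ Nat.gcd y a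

theorem Coat.eq_of_dvd {S : Finset ℕ} {t y z : ℕ} (hy : Coat S t y) (hz : Coat S t z)
    (h : y ∣ z) : y = z := (hy.2.2.2 z hz.1 hz.2.1 hz.2.2.1 h).symm

theorem exists_coat {S : Finset ℕ} {t d : ℕ} (ht : 0 < t) (hd : d ∈ S) (h : d ∣ t) (hne : d ≠ t) :
    ∃ y, Coat S t y ∧ d ∣ y := by
  classical
  obtain ⟨y, hy, hmax⟩ := (S.filter fun z => d ∣ z ∧ z ∣ t ∧ z ≠ t).exists_max_image id
    ⟨d, by simp [hd, h, hne]⟩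
  simp only [Finset.mem_filter] at hy hmax
  refine ⟨y, ⟨hy.1, hy.2.2.1, hy.2.2.2, fun z hz hzt hzne hyz => ?_⟩, hy.2.1⟩
  have h1 := hmax z ⟨hz, hy.2.1.trans hyz, hzt, hzne⟩
  exact le_antisymm h1 (Nat.le_of_dvd (Nat.pos_of_dvd_of_pos hzt ht) hyz)

/-- The combinatorial part. -/
theorem aux_comb (S : Finset ℕ) (hcard : S.card ≤ 8) (hg : ∀ a ∈ S, ∀ b ∈ S, Nat.gcd a b ∈ S)
    (t : ℕ) (htS : t ∈ S) (y y' : ℕ) (hy : Coat S t y) (hy' : Coat S t y')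
    (hne : y ≠ y') (hb : Bad S t y) (hb' : Bad S t y') :
    ∃ c₁ ∈ S, ∃ c₂ ∈ S, ∃ c₃ ∈ S, c₁ ∣ t ∧ c₂ ∣ t ∧ c₃ ∣ t ∧ ¬ Nat.gcd c₁ c₂ ∣ c₃ ∧
      ¬ Nat.gcd c₁ c₃ ∣ c₂ ∧ ¬ Nat.gcd c₂ c₃ ∣ c₁ := by
  obtain ⟨a, b, ha, hbc, hay, hby, h1, h2⟩ := hb
  obtain ⟨c, d, hc, hd, hcy, hdy, h3, h4⟩ := hb'
  by_contra hcon
  have hab : Nat.gcd a b ∣ y := by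
    by_contra h
    exact hcon ⟨y, hy.1, a, ha.1, b, hbc.1, hy.2.1, ha.2.1, hbc.2.1,
      fun k => h1 (Nat.dvd_gcd (Nat.gcd_dvd_left _ _) k),
      fun k => h2 (Nat.dvd_gcd (Nat.gcd_dvd_left _ _) k), h⟩
  -- non-coatoms
  have hnc : ∀ p u v, Coat S t u → Coat S t v → u ≠ v → p ∣ u → p ∣ v → ¬ Coat S t p := by
    intro p u v hu hv huv hpu hpv hp
    exact huv ((hp.eq_of_dvd hu hpu).symm.trans (hp.eq_of_dvd hv hpv))
  have hnt : ∀ p u, Coat S t u → p ∣ u → p ≠ t := by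
    rintro p u hu hpu rfl
    exact hu.2.2.1 (Nat.dvd_antisymm hu.2.1 hpu)
  have hneab : a ≠ b := by rintro rfl; exact h1 dvd_rfl
  have hnecd : c ≠ d := by rintro rfl; exact h3 dvd_rfl
  have hsub : ∀ z, Coat S t z → z = y ∨ z = a ∨ z = b := by
    intro z hz
    by_contra! hz3
    obtain ⟨hz1, hz2, hz3⟩ := hz3
    obtain ⟨h, hh⟩ : ∃ h, h = Nat.gcd y a := ⟨_, rfl⟩
    obtain ⟨k, hk⟩ : ∃ k, k = Nat.gcd y b := ⟨_, rfl⟩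
    obtain ⟨g, hgk⟩ : ∃ g, g = Nat.gcd h k := ⟨_, rfl⟩
    rw [← hh, ← hk] at h1 h2
    have hhy : h ∣ y := hh ▸ Nat.gcd_dvd_left _ _
    have hha : h ∣ a := hh ▸ Nat.gcd_dvd_right _ _
    have hky : k ∣ y := hk ▸ Nat.gcd_dvd_left _ _
    have hkb : k ∣ b := hk ▸ Nat.gcd_dvd_right _ _
    have hgh : g ∣ h := hgk ▸ Nat.gcd_dvd_left _ _
    have hgk' : g ∣ k := hgk ▸ Nat.gcd_dvd_right _ _
    have nh := hnc h y a hy ha hay.symm hhy hha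
    have nk := hnc k y b hy hbc hby.symm hky hkb
    have ng := hnc g y a hy ha hay.symm (hgh.trans hhy) (hgh.trans hha)
    have th := hnt h y hy hhy
    have tk := hnt k y hy hky
    have tg := hnt g y hy (hgh.trans hhy)
    have hS : ({t, y, a, b, z, h, k, g} : Finset ℕ) = S := by
      apply Finset.eq_of_subset_of_card_le
      · have mh : h ∈ S := hh ▸ hg _ hy.1 _ ha.1
        have mk : k ∈ S := hk ▸ hg _ hy.1 _ hbc.1
        have mg : g ∈ S := hgk ▸ hg _ mh _ mk
        intro w hw
        simp only [Finset.mem_insert, Finset.mem_singleton] at hw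
        rcases hw with rfl | rfl | rfl | rfl | rfl | rfl | rfl | rfl
        exacts [htS, hy.1, ha.1, hbc.1, hz.1, mh, mk, mg]
      · have e : ∀ p u, ¬ Coat S t p → Coat S t u → u ≠ p := by
          rintro p u hp hu rfl; exact hp hu
        have ehk : h ≠ k := by rintro rfl; exact h1 dvd_rfl
        have ehg : h ≠ g := by rintro rfl; exact h1 hgk'
        have ekg : k ≠ g := by rintro rfl; exact h2 hgh
        have : ({t, y, a, b, z, h, k, g} : Finset ℕ).card = 8 := by
          rw [Finset.card_insert_of_notMem, Finset.card_insert_of_notMem,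
            Finset.card_insert_of_notMem, Finset.card_insert_of_notMem,
            Finset.card_insert_of_notMem, Finset.card_insert_of_notMem,
            Finset.card_insert_of_notMem, Finset.card_singleton]
          · simpa using ekg
          · simp [ehk, ehg]
          · simp [e _ _ nh hz, e _ _ nk hz, e _ _ ng hz]
          · simp [e _ _ nh hbc, e _ _ nk hbc, e _ _ ng hbc, hz3.symm]
          · simp [e _ _ nh ha, e _ _ nk ha, e _ _ ng ha, hz2.symm, hneab]
          · simp [e _ _ nh hy, e _ _ nk hy, e _ _ ng hy, hz1.symm, hay.symm, hby.symm]
          · simp [th.symm, tk.symm, tg.symm, hy.2.2.1.symm, ha.2.2.1.symm, hbc.2.2.1.symm,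
              hz.2.2.1.symm]
        omega
    have hmem : ∀ u v, Coat S t u → Coat S t v → u ≠ v →
        Nat.gcd u v = h ∨ Nat.gcd u v = k ∨ Nat.gcd u v = g := by
      intro u v hu hv huv
      have m := hg _ hu.1 _ hv.1
      have n1 := hnc _ u v hu hv huv (Nat.gcd_dvd_left _ _) (Nat.gcd_dvd_right _ _)
      have n2 := hnt _ u hu (Nat.gcd_dvd_left u v)
      generalize Nat.gcd u v = p at m n1 n2
      have m' : p ∈ ({t, y, a, b, z, h, k, g} : Finset ℕ) := hS ▸ m
      simp only [Finset.mem_insert, Finset.mem_singleton] at m'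
      rcases m' with rfl | rfl | rfl | rfl | rfl | m'
      · exact absurd rfl n2
      · exact absurd hy n1
      · exact absurd ha n1
      · exact absurd hbc n1
      · exact absurd hz n1
      · exact m'
    have q1 := hmem y' c hy' hc hcy.symm
    have q2 := hmem y' d hy' hd hdy.symm
    have hhk : h ∣ y' ∧ k ∣ y' := by
      have d1 := Nat.gcd_dvd_left y' c
      have d2 := Nat.gcd_dvd_left y' d
      generalize Nat.gcd y' c = q at *
      generalize Nat.gcd y' d = q' at *
      rcases q1 with rfl | rfl | rfl <;> rcases q2 with rfl | rfl | rfl <;>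
        first
        | exact ⟨d1, d2⟩
        | exact ⟨d2, d1⟩
        | exact absurd dvd_rfl h3
        | exact absurd ‹_› h3
        | exact absurd ‹_› h4
    have e1 := Nat.dvd_gcd hhy hhk.1
    have e2 := Nat.dvd_gcd hky hhk.2
    rcases hmem y y' hy hy' hne with h | h | h <;> rw [h] at e1 e2
    · exact h2 e2
    · exact h1 e1
    · exact h1 (e1.trans hgk')
  have fin : ∀ a b : ℕ, y' = a → (c = y ∨ c = a ∨ c = b) → (d = y ∨ d = a ∨ d = b) →
      Nat.gcd a b ∣ y → False := by
    intro a b ea ec ed hab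
    subst ea
    have hd' : Nat.gcd y' b ∣ Nat.gcd y' y := Nat.dvd_gcd (Nat.gcd_dvd_left _ _) hab
    rcases ec with rfl | rfl | rfl
    · rcases ed with rfl | rfl | rfl
      · exact hnecd rfl
      · exact hdy rfl
      · exact h4 hd'
    · exact hcy rfl
    · rcases ed with rfl | rfl | rfl
      · exact h3 hd'
      · exact hdy rfl
      · exact hnecd rfl
  rcases hsub y' hy' with e | e | e
  · exact hne e.symm
  · exact fin a b e (hsub c hc) (hsub d hd) hab
  · refine fin b a e ?_ ?_ (by rwa [Nat.gcd_comm])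
    · rcases hsub c hc with h | h | h <;> simp [h]
    · rcases hsub d hd with h | h | h <;> simp [h]

theorem half_bound {m y : ℕ} (hm : m ∣ y) (hne : m ≠ y) (hy : 0 < y) :
    2 * (1 / (y : ℚ)) ≤ 1 / (m : ℚ) := by
  obtain ⟨q, rfl⟩ := hm
  have hm0 : 0 < m := Nat.pos_of_mul_pos_right hy
  have hq : 2 ≤ q := by
    rcases q with _ | _ | q
    · simp at hy
    · simp at hne
    · omega
  have h1 : (0 : ℚ) < m := by exact_mod_cast hm0
  have h2 : (2 : ℚ) ≤ q := by exact_mod_cast hq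
  push_cast
  rw [mul_one_div, div_le_div_iff₀ (by positivity) h1]
  nlinarith

/-- The analytic part. -/
theorem aux_pos (x : Fin 8 → ℕ) (hpos : ∀ i, 0 < x i) (hinj : Function.Injective x)
    (S : Finset ℕ) (hS : S = Finset.univ.image x)
    (hg : ∀ a ∈ S, ∀ b ∈ S, Nat.gcd a b ∈ S)
    (α : Fin 8 → ℚ) (hα : ∀ i, ∑ j, (if x j ∣ x i then α j else 0) = 1 / (x i : ℚ))
    (k : Fin 8) (hk : α k = 0) (y₁ : ℕ) (hy₁ : Coat S (x k) y₁)
    (hgood : ∀ y, Coat S (x k) y → y ≠ y₁ → ¬ Bad S (x k) y) : False := by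
  classical
  have hα' : ∀ n ∈ S, ∑ j, (if x j ∣ n then α j else 0) = 1 / (n : ℚ) := by
    intro n hn
    rw [hS] at hn
    obtain ⟨i, _, rfl⟩ := Finset.mem_image.mp hn
    exact hα i
  have hSpos : ∀ n ∈ S, 0 < n := by
    intro n hn
    rw [hS] at hn
    obtain ⟨i, _, rfl⟩ := Finset.mem_image.mp hn
    exact hpos i
  let U : Finset ℕ → ℚ := fun A => ∑ j, if ∃ a ∈ A, x j ∣ a then α j else 0
  have hU1 : ∀ n ∈ S, U {n} = 1 / (n : ℚ) := by
    intro n hn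
    rw [← hα' n hn]
    simp [U]
  -- insertion step
  have hUins : ∀ A : Finset ℕ, ∀ y ∈ S, ∀ m ∈ S, m ∣ y → (∃ a ∈ A, m ∣ a) →
      (∀ a ∈ A, Nat.gcd y a ∣ m) → U (insert y A) = U A + 1 / (y : ℚ) - 1 / (m : ℚ) := by
    intro A y hy m hm hmy hma hall
    rw [← hα' y hy, ← hα' m hm]
    simp only [U]
    rw [← Finset.sum_add_distrib, ← Finset.sum_sub_distrib]
    refine Finset.sum_congr rfl fun j _ => ?_
    have e1 : x j ∣ m ↔ (x j ∣ y ∧ ∃ a ∈ A, x j ∣ a) := by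
      constructor
      · intro h
        obtain ⟨a, ha, hma⟩ := hma
        exact ⟨h.trans hmy, a, ha, h.trans hma⟩
      · rintro ⟨h, a, ha, hja⟩
        exact (Nat.dvd_gcd h hja).trans (hall a ha)
    have e2 : (∃ a ∈ insert y A, x j ∣ a) ↔ (x j ∣ y ∨ ∃ a ∈ A, x j ∣ a) := by simp
    by_cases p : x j ∣ y <;> by_cases q : ∃ a ∈ A, x j ∣ a <;>
      simp only [e1, e2, p, q] <;> simp
  -- step for good
  have hstep : ∀ A : Finset ℕ, A.Nonempty → (∀ a ∈ A, Coat S (x k) a) → ∀ y, Coat S (x k) y →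
      y ≠ y₁ → y ∉ A → ∃ a ∈ A, U (insert y A) = U A + 1 / (y : ℚ) - 1 / (Nat.gcd y a : ℚ) := by
    intro A hA hAC y hy hyy hyA
    obtain ⟨a, ha, hmax⟩ := A.exists_max_image (fun a => Nat.gcd y a) hA
    refine ⟨a, ha, hUins A y hy.1 _ (hg _ hy.1 _ (hAC a ha).1) (Nat.gcd_dvd_left _ _)
      ⟨a, ha, Nat.gcd_dvd_right _ _⟩ ?_⟩
    intro b hb
    by_contra hcon
    have h1 : Nat.gcd y a ∣ Nat.gcd y b := by
      by_contra h2
      exact hgood y hy hyy ⟨a, b, hAC a ha, hAC b hb, by rintro rfl; exact hyA ha,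
        by rintro rfl; exact hyA hb, h2, hcon⟩
    have h2 := Nat.le_of_dvd (Nat.gcd_pos_of_pos_left _ (hSpos y hy.1)) h1
    have h3 := hmax b hb
    exact hcon (by rw [le_antisymm h3 h2])
  have hgne : ∀ y a, Coat S (x k) y → Coat S (x k) a → y ≠ a → Nat.gcd y a ≠ y := by
    intro y a hy ha hne h
    exact hne (hy.eq_of_dvd ha (h ▸ Nat.gcd_dvd_right y a))
  have hind : ∀ B : Finset ℕ, B.Nonempty → (∀ b ∈ B, Coat S (x k) b) → y₁ ∉ B →
      U (insert y₁ B) ≤ 0 := by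
    intro B hB
    induction hB using Finset.Nonempty.cons_induction with
    | singleton b =>
      intro hC hn
      have hb := hC b (by simp)
      have hne : y₁ ≠ b := by simpa using hn
      rw [Finset.pair_comm]
      obtain ⟨a, ha, h⟩ := hstep {y₁} (by simp) (by simpa using hy₁) b hb hne.symm
        (by simpa using hne.symm)
      rw [Finset.mem_singleton] at ha
      subst ha
      rw [h, hU1 _ hy₁.1]
      have b1 := half_bound (Nat.gcd_dvd_left b a) (hgne b a hb hy₁ hne.symm) (hSpos _ hb.1)
      have b2 := half_bound (Nat.gcd_dvd_right b a)
        (by rw [Nat.gcd_comm]; exact hgne a b hy₁ hb hne) (hSpos _ hy₁.1)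
      linarith
    | cons b B hbB hB ih =>
      intro hC hn
      rw [Finset.cons_eq_insert] at hn hC ⊢
      simp only [Finset.mem_insert, not_or] at hn
      have hb := hC b (by simp)
      have ih' := ih (fun c hc => hC c (by simp [hc])) hn.2
      rw [Finset.insert_comm]
      obtain ⟨a, ha, h⟩ := hstep (insert y₁ B) (by simp)
        (by
          intro a ha
          rcases Finset.mem_insert.mp ha with rfl | ha
          · exact hy₁
          · exact hC a (by simp [ha])) b hb (Ne.symm hn.1)
        (by simp only [Finset.mem_insert, not_or]; exact ⟨Ne.symm hn.1, hbB⟩)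
      have haC : Coat S (x k) a := by
        rcases Finset.mem_insert.mp ha with rfl | ha
        · exact hy₁
        · exact hC a (by simp [ha])
      have hba : b ≠ a := by
        rintro rfl
        rcases Finset.mem_insert.mp ha with h | h
        · exact hn.1 h.symm
        · exact hbB h
      have b1 := half_bound (Nat.gcd_dvd_left b a) (hgne b a hb haC hba) (hSpos _ hb.1)
      have b2 : (0 : ℚ) ≤ 1 / (b : ℚ) := by positivity
      rw [h]
      linarith
  have hkS : x k ∈ S := by rw [hS]; simp
  let B := S.filter fun y => Coat S (x k) y ∧ y ≠ y₁
  have htot : U (insert y₁ B) = 1 / (x k : ℚ) := by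
    rw [← hα k]
    simp only [U]
    refine Finset.sum_congr rfl fun j _ => ?_
    by_cases hjk : j = k
    · subst hjk; simp [hk]
    · have : (∃ a ∈ insert y₁ B, x j ∣ a) ↔ x j ∣ x k := by
        constructor
        · rintro ⟨a, ha, hja⟩
          have : Coat S (x k) a := by
            rcases Finset.mem_insert.mp ha with rfl | ha
            · exact hy₁
            · exact (Finset.mem_filter.mp ha).2.1
          exact hja.trans this.2.1
        · intro h
          obtain ⟨y, hy, hjy⟩ := exists_coat (hpos k) (S := S) (by rw [hS]; simp) h
            (fun e => hjk (hinj e))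
          refine ⟨y, ?_, hjy⟩
          by_cases e : y = y₁
          · simp [e]
          · exact Finset.mem_insert_of_mem (Finset.mem_filter.mpr ⟨hy.1, hy, e⟩)
      simp only [this]
  have hxk : (0 : ℚ) < 1 / (x k : ℚ) := by
    have : (0 : ℚ) < x k := by exact_mod_cast hpos k
    positivity
  rcases B.eq_empty_or_nonempty with hB | hB
  · rw [hB] at htot
    have h1 := hU1 _ hy₁.1
    have h2 := half_bound hy₁.2.1 hy₁.2.2.1 (hpos k)
    have h3 : U (insert y₁ ∅) = U {y₁} := rfl
    linarith
  · have := hind B hB (fun b hb => (Finset.mem_filter.mp hb).2.1)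
      (fun h => (Finset.mem_filter.mp h).2.2 rfl)
    linarith

/-- If `S = {x 0, …, x 7}` is a GCD closed set of 8 distinct positive integers whose
LCM matrix `[lcm (x i) (x j)]` is singular, then the poset `(S, ∣)` is order-isomorphic
to the lattice of subsets of a three-element set ordered by inclusion. -/
theorem stmt_3 (x : Fin 8 → ℕ) (hpos : ∀ i, 0 < x i) (hinj : Function.Injective x)
    (hgcd : ∀ i j, ∃ k, x k = Nat.gcd (x i) (x j))
    (hdet : (Matrix.of fun i j => (Nat.lcm (x i) (x j) : ℤ)).det = 0) :
    ∃ e : Fin 8 ≃ Finset (Fin 3), ∀ i j, x i ∣ x j ↔ e i ⊆ e j := by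
  classical
  obtain ⟨α, hα, k, hk⟩ := aux_alpha x hpos hinj hgcd hdet
  obtain ⟨S, hS⟩ : ∃ S : Finset ℕ, S = Finset.univ.image x := ⟨_, rfl⟩
  have hmem : ∀ n, n ∈ S ↔ ∃ i, x i = n := by intro n; simp [hS]
  have hg : ∀ a ∈ S, ∀ b ∈ S, Nat.gcd a b ∈ S := by
    intro a ha b hb
    rw [hmem] at *
    obtain ⟨i, rfl⟩ := ha
    obtain ⟨j, rfl⟩ := hb
    exact hgcd i j
  have hcard : S.card ≤ 8 := by
    rw [hS]; exact Finset.card_image_le.trans (by simp)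
  have hkS : x k ∈ S := (hmem _).2 ⟨k, rfl⟩
  have hbad : ∀ y₁, Coat S (x k) y₁ → ∃ y, Coat S (x k) y ∧ y ≠ y₁ ∧ Bad S (x k) y := by
    intro y₁ hy₁
    by_contra! hcon
    exact aux_pos x hpos hinj S hS hg α hα k hk y₁ hy₁ hcon
  have hC : ∃ y₁, Coat S (x k) y₁ := by
    by_contra! hcon
    have h1 := hα k
    have hxk : (0 : ℚ) < 1 / (x k : ℚ) := by
      have : (0 : ℚ) < x k := by exact_mod_cast hpos k
      positivity
    rw [Finset.sum_eq_zero] at h1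
    · linarith
    · intro j _
      by_cases hjk : j = k
      · subst hjk; simp [hk]
      · rw [if_neg]
        intro h
        obtain ⟨y, hy, _⟩ := exists_coat (hpos k) ((hmem _).2 ⟨j, rfl⟩) h
          (fun e => hjk (hinj e))
        exact hcon y hy
  obtain ⟨y₀, hy₀⟩ := hC
  obtain ⟨y, hy, _, hb⟩ := hbad y₀ hy₀
  obtain ⟨y', hy', hne, hb'⟩ := hbad y hy
  obtain ⟨c₁, m1, c₂, m2, c₃, m3, d1, d2, d3, n12, n13, n23⟩ :=
    aux_comb S hcard hg (x k) hkS y y' hy hy' hne.symm hb hb'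
  let c : Fin 3 → ℕ := ![c₁, c₂, c₃]
  have hF : ∀ A : Finset (Fin 3), ∃ i, x i ∣ x k ∧ ∀ n, n ∣ x i ↔ (n ∣ x k ∧ ∀ j, j ∉ A → n ∣ c j) := by
    intro A
    have step : ∀ i, ∀ (p : Prop), ∀ m ∈ S, ∃ i', ∀ n, n ∣ x i' ↔ (n ∣ x i ∧ (p → n ∣ m)) := by
      intro i p m hm
      by_cases hp : p
      · obtain ⟨j, rfl⟩ := (hmem m).1 hm
        obtain ⟨l, hl⟩ := hgcd i j
        exact ⟨l, fun n => by rw [hl, Nat.dvd_gcd_iff]; simp [hp]⟩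
      · exact ⟨i, fun n => by simp [hp]⟩
    obtain ⟨i1, h1⟩ := step k (0 ∉ A) c₁ m1
    obtain ⟨i2, h2⟩ := step i1 (1 ∉ A) c₂ m2
    obtain ⟨i3, h3⟩ := step i2 (2 ∉ A) c₃ m3
    refine ⟨i3, ?_, ?_⟩
    · have := (h3 (x i3)).1 dvd_rfl
      rw [h2, h1] at this
      exact this.1.1.1
    · intro n
      rw [h3, h2, h1, Fin.forall_fin_succ, Fin.forall_fin_two]
      simp only [c, and_assoc]
      rfl
  choose F hFk hF using hF
  have key : ∀ A j, x (F A) ∣ c j ↔ j ∉ A := by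
    intro A j
    constructor
    · intro h hj
      have hne : ∃ n, n ∣ x k ∧ (∀ l, l ≠ j → n ∣ c l) ∧ ¬ n ∣ c j := by
        fin_cases j
        · exact ⟨Nat.gcd c₂ c₃, (Nat.gcd_dvd_left _ _).trans d2,
            by intro l hl; fin_cases l <;> simp [c, Nat.gcd_dvd_left, Nat.gcd_dvd_right] at hl ⊢,
            n23⟩
        · exact ⟨Nat.gcd c₁ c₃, (Nat.gcd_dvd_left _ _).trans d1,
            by intro l hl; fin_cases l <;> simp [c, Nat.gcd_dvd_left, Nat.gcd_dvd_right] at hl ⊢,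
            n13⟩
        · exact ⟨Nat.gcd c₁ c₂, (Nat.gcd_dvd_left _ _).trans d1,
            by intro l hl; fin_cases l <;> simp [c, Nat.gcd_dvd_left, Nat.gcd_dvd_right] at hl ⊢,
            n12⟩
      obtain ⟨n, hn1, hn2, hn3⟩ := hne
      have : n ∣ x (F A) := (hF A n).2 ⟨hn1, fun l hl => hn2 l (by rintro rfl; exact hl hj)⟩
      exact hn3 (this.trans h)
    · intro h
      exact ((hF A _).1 dvd_rfl).2 j h
  have hord : ∀ A B, x (F A) ∣ x (F B) ↔ A ⊆ B := by
    intro A B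
    constructor
    · intro h j hjA
      by_contra hjB
      exact (key A j).1 (h.trans ((key B j).2 hjB)) hjA
    · intro h
      exact (hF B _).2 ⟨hFk A, fun j hj => (key A j).2 fun hA => hj (h hA)⟩
  have hFinj : Function.Injective F := by
    intro A B h
    exact Finset.Subset.antisymm ((hord A B).1 (by rw [h])) ((hord B A).1 (by rw [h]))
  have hbij : Function.Bijective F :=
    (Fintype.bijective_iff_injective_and_card F).2 ⟨hFinj, by simp⟩
  refine ⟨(Equiv.ofBijective F hbij).symm, fun i j => ?_⟩
  rw [← hord]
  have e : ∀ i, F ((Equiv.ofBijective F hbij).symm i) = i :=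
    fun i => (Equiv.ofBijective F hbij).apply_symm_apply i
  rw [e, e]
end

section
/- The set S = {1, 3, 5, 7, 195, 291, 1407, 4025, 1020180525} is a GCD closed set of odd positive integers, and the 9×9 LCM matrix [S] with ij-entry lcm(x_i, x_j) is singular, i.e. its determinant is 0. (In particular, Hong's conjecture that the LCM matrix on any odd GCD closed set is nonsingular is false.) -/
/-- The counterexample set of Theorem 4.2: `{1, 3, 5, 7, 195, 291, 1407, 4025, 1020180525}`. -/
def hongCounterexample : Fin 9 → ℕ := ![1, 3, 5, 7, 195, 291, 1407, 4025, 1020180525]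

/-- The set `S = {1, 3, 5, 7, 195, 291, 1407, 4025, 1020180525}` is a GCD closed set of
odd positive integers and its LCM matrix `[lcm (x i) (x j)]` is singular.  In particular
Hong's conjecture that the LCM matrix on any odd GCD closed set is nonsingular is false. -/
theorem stmt_4 :
    (∀ i, Odd (hongCounterexample i)) ∧
    (∀ i, 0 < hongCounterexample i) ∧
    Function.Injective hongCounterexample ∧
    (∀ i j, ∃ k, hongCounterexample k = Nat.gcd (hongCounterexample i) (hongCounterexample j)) ∧
    (Matrix.of fun i j => (Nat.lcm (hongCounterexample i) (hongCounterexample j) : ℤ)).det = 0 := by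
  refine ⟨by decide, by decide, by decide, by decide, ?_⟩
  rw [← Matrix.exists_mulVec_eq_zero_iff]
  refine ⟨![-1020180525, 680120350, 204036105, 145740075, -5231695, -3505775, -725075, -253461, 1], ?_, ?_⟩
  · intro h
    have := congrFun h 8
    revert this
    decide
  · decide
end

section
/- There exists an odd primitive singular number. That is, there exists an odd positive integer x such that x is a singular number and every divisor x' of x with x' ≠ x is a nonsingular number. -/
/-- The Möbius function of the poset `(S, ∣)` of a finite set `S` of positive integers
ordered by divisibility: `mobiusOn S y y = 1` and, for `y ∣ x`, `y ≠ x`,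
`mobiusOn S y x = -∑_{z ∈ S, y ∣ z ∣ x, z ≠ x} mobiusOn S y z`. -/
def mobiusOn (S : Finset ℕ) (y : ℕ) : ℕ → ℤ
  | x =>
    if x = y then 1
    else if hx : x = 0 then 0
    else
      -∑ z ∈ (S.filter fun z => y ∣ z ∧ z ∣ x ∧ z ≠ x).attach,
        mobiusOn S y z.1
termination_by x => x
decreasing_by
  have hz := z.2
  simp only [Finset.mem_filter] at hz
  exact lt_of_le_of_ne (Nat.le_of_dvd (Nat.pos_of_ne_zero hx) hz.2.2.1) hz.2.2.2

/-- A finite set of naturals is GCD closed if it is closed under taking gcd's. -/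
def IsGcdClosed (S : Finset ℕ) : Prop := ∀ a ∈ S, ∀ b ∈ S, Nat.gcd a b ∈ S

/-- `Ψ_{S,1/N}(x) = ∑_{y ∈ S, y ∣ x} μ_S(y, x) / y`. -/
noncomputable def PsiInvN (S : Finset ℕ) (x : ℕ) : ℝ :=
  ∑ y ∈ S.filter (· ∣ x), (mobiusOn S y x : ℝ) / (y : ℝ)

/-- A positive integer `x` is a singular number if there is a GCD closed set `S` of
positive integers with greatest element `x` such that `Ψ_{S,1/N}(x) = 0`. -/
def IsSingularNumber (x : ℕ) : Prop :=
  ∃ S : Finset ℕ, (∀ a ∈ S, 0 < a) ∧ IsGcdClosed S ∧ x ∈ S ∧ (∀ a ∈ S, a ≤ x) ∧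
    PsiInvN S x = 0

def auxM (S : Finset ℕ) : ℕ → ℕ → ℕ → ℤ
  | 0, _, _ => 0
  | k + 1, y, x => if x = y then 1 else
      -∑ z ∈ S.filter (fun z => y ∣ z ∧ z ∣ x ∧ z ≠ x), auxM S k y z

theorem mobiusOn_eq_auxM (S : Finset ℕ) (k : ℕ) (hpos : ∀ a ∈ S, 0 < a)
    (h : ∀ y ∈ S, ∀ x ∈ S, auxM S k y x = auxM S (k + 1) y x) (y : ℕ) (hy : y ∈ S) :
    ∀ x ∈ S, mobiusOn S y x = auxM S k y x := by
  intro x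
  induction x using Nat.strong_induction_on with
  | _ x ih =>
    intro hx
    have hx0 := hpos x hx
    rw [h y hy x hx, mobiusOn, auxM]
    split_ifs with h1 h2
    · rfl
    · omega
    · congr 1
      rw [Finset.sum_attach (S.filter fun z => y ∣ z ∧ z ∣ x ∧ z ≠ x) (fun z => mobiusOn S y z)]
      apply Finset.sum_congr rfl
      intro z hz
      simp only [Finset.mem_filter] at hz
      exact ih z (lt_of_le_of_ne (Nat.le_of_dvd hx0 hz.2.2.1) hz.2.2.2) hz.1

def auxS : Finset ℕ := {1, 3, 5, 15, 19, 21, 37, 57, 95, 105, 111, 185, 285, 399, 555, 703, 777, 2109, 3515, 73815}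

theorem auxS_sum : ∑ y ∈ auxS.filter (· ∣ 73815), auxM auxS 8 y 73815 * ((73815 / y : ℕ) : ℤ) = 0 := by
  decide +kernel

theorem auxS_singular : IsSingularNumber 73815 := by
  have hpos : ∀ a ∈ auxS, 0 < a := by decide +kernel
  have hmem : 73815 ∈ auxS := by decide +kernel
  refine ⟨auxS, hpos, ?_, hmem, by decide +kernel, ?_⟩
  · unfold IsGcdClosed
    decide +kernel
  · have h := mobiusOn_eq_auxM auxS 8 hpos (by decide +kernel)
    have e : PsiInvN auxS 73815 =
        ((∑ y ∈ auxS.filter (· ∣ 73815), auxM auxS 8 y 73815 * ((73815 / y : ℕ) : ℤ) : ℤ) : ℝ) / 73815 := by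
      unfold PsiInvN
      rw [Int.cast_sum, Finset.sum_div]
      apply Finset.sum_congr rfl
      intro y hy
      simp only [Finset.mem_filter] at hy
      rw [h y hy.1 _ hmem]
      have hy0 : (y : ℝ) ≠ 0 := by
        have := hpos y hy.1
        positivity
      rw [Int.cast_mul, Int.cast_natCast, Nat.cast_div hy.2 hy0]
      push_cast
      field_simp
    rw [e, auxS_sum]
    simp

/-- There exists an odd primitive singular number: an odd positive integer `x` which is
a singular number while every proper divisor of `x` is a nonsingular number. -/
theorem stmt_5 :
    ∃ x : ℕ, 0 < x ∧ Odd x ∧ IsSingularNumber x ∧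
      ∀ x' : ℕ, x' ∣ x → x' ≠ x → ¬IsSingularNumber x' := by
  classical
  have hex : ∃ x : ℕ, 0 < x ∧ Odd x ∧ IsSingularNumber x :=
    ⟨73815, by norm_num, by decide +kernel, auxS_singular⟩
  obtain ⟨h1, h2, h3⟩ := Nat.find_spec hex
  refine ⟨Nat.find hex, h1, h2, h3, ?_⟩
  intro x' hd hne hs
  have hlt := lt_of_le_of_ne (Nat.le_of_dvd h1 hd) hne
  exact Nat.find_min hex hlt ⟨Nat.pos_of_dvd_of_pos hd h1, h2.of_dvd_nat hd, hs⟩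
end

section
/- If S is a GCD closed set of odd positive integers with at most 8 elements, then the LCM matrix [S] with ij-entry lcm(x_i, x_j) is nonsingular (its determinant is nonzero). -/
lemma aux_sum_lt (r : ℕ) (hr : Odd r) (D : Finset ℕ) (hD : ∀ d ∈ D, d ∣ r ∧ d ≠ r)
    (hc : D.card ≤ 6) : (∑ d ∈ D, (d : ℚ)) < r := by
  have hr0 : 0 < r := hr.pos
  have hrq : (0 : ℚ) < r := by exact_mod_cast hr0
  have key : ∀ d ∈ D, (d : ℚ) ≤ r / 13 + ∑ e ∈ ({3, 5, 7, 9, 11} : Finset ℕ),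
      (if d * e = r then (r : ℚ) * (1 / e - 1 / 13) else 0) := by
    intro d hd
    obtain ⟨⟨e, he⟩, hne⟩ := hD d hd
    have heo : Odd e := by
      rw [he] at hr
      exact (Nat.odd_mul.mp hr).2
    have hd0 : 0 < d := by
      rcases Nat.eq_zero_or_pos d with h | h
      · subst h; simp at he; omega
      · exact h
    have he1 : e ≠ 1 := by
      rintro rfl; apply hne; simpa using he.symm
    have hre : (r : ℚ) = d * e := by exact_mod_cast he
    have hdq : (0 : ℚ) < d := by exact_mod_cast hd0
    have hnn : ∀ f ∈ ({3, 5, 7, 9, 11} : Finset ℕ),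
        0 ≤ (if d * f = r then (r : ℚ) * (1 / f - 1 / 13) else 0) := by
      intro f hf
      split_ifs
      · apply mul_nonneg hrq.le
        simp at hf
        rcases hf with rfl | rfl | rfl | rfl | rfl <;> norm_num
      · exact le_rfl
    by_cases h13 : 13 ≤ e
    · have h1 : (d : ℚ) ≤ r / 13 := by
        rw [hre, le_div_iff₀ (by norm_num)]
        have : (13 : ℚ) ≤ e := by exact_mod_cast h13
        nlinarith
      have := Finset.sum_nonneg hnn
      linarith
    · have hmem : e ∈ ({3, 5, 7, 9, 11} : Finset ℕ) := by
        obtain ⟨k, hk⟩ := heo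
        simp; omega
      have h2 := Finset.single_le_sum hnn hmem
      rw [if_pos he.symm] at h2
      have he0 : (e : ℚ) ≠ 0 := by
        have : 0 < e := heo.pos
        positivity
      have h3 : (d : ℚ) = r / 13 + (r : ℚ) * (1 / e - 1 / 13) := by
        rw [hre]; field_simp; ring
      linarith
  have h1 := Finset.sum_le_sum key
  rw [Finset.sum_add_distrib, Finset.sum_comm] at h1
  have h2 : ∀ e ∈ ({3, 5, 7, 9, 11} : Finset ℕ),
      ∑ d ∈ D, (if d * e = r then (r : ℚ) * (1 / e - 1 / 13) else 0)
        ≤ (r : ℚ) * (1 / e - 1 / 13) := by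
    intro e he
    have hK : 0 ≤ (r : ℚ) * (1 / e - 1 / 13) := by
      apply mul_nonneg hrq.le
      simp at he
      rcases he with rfl | rfl | rfl | rfl | rfl <;> norm_num
    have he0 : 0 < e := by
      simp at he
      omega
    rw [← Finset.sum_filter, Finset.sum_const, nsmul_eq_mul]
    have hc1 : (D.filter (fun d => d * e = r)).card ≤ 1 := by
      rw [Finset.card_le_one]
      intro a ha b hb
      simp at ha hb
      exact Nat.eq_of_mul_eq_mul_right he0 (ha.2.trans hb.2.symm)
    have hc1' : ((D.filter (fun d => d * e = r)).card : ℚ) ≤ 1 := by exact_mod_cast hc1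
    nlinarith
  have h3 := Finset.sum_le_sum h2
  have h4 : ∑ e ∈ ({3, 5, 7, 9, 11} : Finset ℕ), (r : ℚ) * (1 / e - 1 / 13)
    = r * (3043/3465 - 5/13) := by
    rw [← Finset.mul_sum]
    congr 1
    simp
    norm_num
  have h5 : ∑ d ∈ D, (r : ℚ) / 13 ≤ 6 * (r / 13) := by
    rw [Finset.sum_const, nsmul_eq_mul]
    have : (D.card : ℚ) ≤ 6 := by exact_mod_cast hc
    apply mul_le_mul_of_nonneg_right this
    positivity
  rw [h4] at h3
  linarith

lemma aux_core (At R : Finset ℕ) (T : ℕ) (c : ℕ → ℚ)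
    (hT : T ∈ R) (hRT : ∀ r ∈ R, r ∣ T) (hAT : ∀ a ∈ At, a ∣ T)
    (hodd : ∀ r ∈ R, Odd r) (hdisj : Disjoint At R) (hapos : ∀ a ∈ At, 0 < a)
    (hcard : At.card + R.card ≤ 7)
    (h1 : ∀ r ∈ R, ∑ s ∈ R, (if s ∣ r then c s else 0) = ((At.filter (· ∣ r)).card : ℚ) - 1)
    (h2 : ∀ r ∈ R, 2 ≤ (At.filter (· ∣ r)).card)
    (h4 : ∀ r ∈ R, ∀ s ∈ R, At.filter (· ∣ r) ⊆ At.filter (· ∣ s) → r ∣ s)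
    (h5 : ∀ u ∈ R, ∀ v ∈ R, 2 ≤ (At.filter (· ∣ u) ∩ At.filter (· ∣ v)).card →
      ∃ w ∈ R, w ∣ u ∧ w ∣ v) :
    1 - ∑ a ∈ At, (a : ℚ) + ∑ r ∈ R, c r * r ≠ 0 := by
  have hRpos : 1 ≤ R.card := Finset.card_pos.mpr ⟨T, hT⟩
  have hsum : ∀ r ∈ R, ∑ a ∈ At.filter (· ∣ r), (a : ℚ) < r := by
    intro r hr
    apply aux_sum_lt r (hodd r hr)
    · intro d hd
      simp at hd
      refine ⟨hd.2, ?_⟩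
      rintro rfl
      exact Finset.disjoint_left.mp hdisj hd.1 hr
    · have := Finset.card_filter_le At (· ∣ r)
      omega
  have hATf : At.filter (· ∣ T) = At := Finset.filter_true_of_mem hAT
  have hsT := hsum T hT
  rw [hATf] at hsT
  have hqT := h1 T hT
  rw [hATf] at hqT
  have h2T := h2 T hT
  rw [hATf] at h2T
  -- facts on proper elements
  have hprop : ∀ u ∈ R, u ≠ T → (At.filter (· ∣ u)).card < At.card ∧ ¬ T ∣ u := by
    intro u hu hne
    have hnd : ¬ T ∣ u := fun h => hne (Nat.dvd_antisymm (hRT u hu) h)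
    refine ⟨?_, hnd⟩
    apply Finset.card_lt_card
    rw [Finset.ssubset_iff_subset_ne]
    refine ⟨Finset.filter_subset _ _, fun h => ?_⟩
    apply hnd
    apply h4 T hT u hu
    rw [h, hATf]
  have hposq : ∀ u ∈ R, (0 : ℚ) < u := fun u hu => by exact_mod_cast (hodd u hu).pos
  have hATpos : 0 < ∑ a ∈ At, (a : ℚ) := by
    apply Finset.sum_pos
    · intro a ha; exact_mod_cast hapos a ha
    · apply Finset.card_pos.mp; omega
  have hTpos := hposq T hT
  have hins : R = insert T (R.erase T) := (Finset.insert_erase hT).symm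
  have hcR : R.card = (R.erase T).card + 1 := (Finset.card_erase_add_one hT).symm
  have hm : ∀ u ∈ R.erase T, u ∈ R ∧ u ≠ T := fun u hu =>
    ⟨Finset.mem_of_mem_erase hu, Finset.ne_of_mem_erase hu⟩
  generalize hR' : R.erase T = R' at *
  have hTn : T ∉ R' := by rw [← hR']; simp
  have hle : R'.card ≤ 3 := by
    by_contra hcon
    have : 0 < R'.card := by omega
    obtain ⟨u, hu⟩ := Finset.card_pos.mp this
    have a1 := (hprop u (hm u hu).1 (hm u hu).2).1
    have a2 := h2 u (hm u hu).1
    omega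
  have hcases : R'.card = 0 ∨ R'.card = 1 ∨ R'.card = 2 ∨ R'.card = 3 := by omega
  rcases hcases with h | h | h | h
  · rw [Finset.card_eq_zero] at h
    subst h
    rw [hins] at hqT ⊢
    simp at hqT ⊢
    have : (2 : ℚ) ≤ At.card := by exact_mod_cast h2T
    nlinarith
  · obtain ⟨u, rfl⟩ := Finset.card_eq_one.mp h
    obtain ⟨huR, huT⟩ := hm u (by simp)
    obtain ⟨hlt, hnd⟩ := hprop u huR huT
    have hq := h1 u huR
    have h2u := h2 u huR
    have hud := hRT u huR
    rw [hins] at hq hqT ⊢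
    rw [Finset.sum_insert hTn] at hq hqT ⊢
    simp only [Finset.sum_singleton, hnd, hud, dvd_refl, if_true, if_false] at hq hqT ⊢
    have e1 : (2 : ℚ) ≤ (At.filter (· ∣ u)).card := by exact_mod_cast h2u
    have e2 : ((At.filter (· ∣ u)).card : ℚ) + 1 ≤ At.card := by exact_mod_cast hlt
    have := hposq u huR
    nlinarith
  · obtain ⟨u, v, huv, rfl⟩ := Finset.card_eq_two.mp h
    -- wlog not v ∣ u
    have main : ∀ u v : ℕ, u ≠ v → R = insert T {u, v} → T ∉ ({u, v} : Finset ℕ) → ¬ v ∣ u →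
        1 - ∑ a ∈ At, (a : ℚ) + ∑ r ∈ R, c r * r ≠ 0 := by
      intro u v huv hins hTn hvu
      have huR : u ∈ R := by rw [hins]; simp
      have hvR : v ∈ R := by rw [hins]; simp
      have huT : u ≠ T := by rintro rfl; simp at hTn
      have hvT : v ≠ T := by rintro rfl; simp at hTn
      obtain ⟨hltu, hndu⟩ := hprop u huR huT
      obtain ⟨hltv, hndv⟩ := hprop v hvR hvT
      have hqu := h1 u huR
      have hqv := h1 v hvR
      have h2u := h2 u huR
      have h2v := h2 v hvR
      have hud := hRT u huR
      have hvd := hRT v hvR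
      have hsu := hsum u huR
      have hsv := hsum v hvR
      have h5' := h5 u huR v hvR
      have h4' := h4 v hvR u huR
      rw [hins] at hqu hqv hqT ⊢
      rw [Finset.sum_insert hTn, Finset.sum_pair huv] at hqu hqv hqT ⊢
      simp only [hndu, hndv, hvu, hud, hvd, dvd_refl, if_true, if_false] at hqu hqv hqT ⊢
      have e1 : (2 : ℚ) ≤ (At.filter (· ∣ u)).card := by exact_mod_cast h2u
      have e2 : ((At.filter (· ∣ u)).card : ℚ) + 1 ≤ At.card := by exact_mod_cast hltu
      have e3 : (2 : ℚ) ≤ (At.filter (· ∣ v)).card := by exact_mod_cast h2v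
      have e4 : ((At.filter (· ∣ v)).card : ℚ) + 1 ≤ At.card := by exact_mod_cast hltv
      have pu := hposq u huR
      have pv := hposq v hvR
      by_cases hd : u ∣ v
      · simp only [hd, if_true] at hqv
        have hlt : (At.filter (· ∣ u)).card < (At.filter (· ∣ v)).card := by
          apply Finset.card_lt_card
          rw [Finset.ssubset_iff_subset_ne]
          constructor
          · intro a ha
            simp at ha ⊢
            exact ⟨ha.1, ha.2.trans hd⟩
          · intro h
            apply hvu
            apply h4'
            rw [h]
        have e5 : ((At.filter (· ∣ u)).card : ℚ) + 1 ≤ (At.filter (· ∣ v)).card := by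
          exact_mod_cast hlt
        have f1 : 0 ≤ c u * u := mul_nonneg (by linarith) pu.le
        have f2 : 0 ≤ c v * v := mul_nonneg (by linarith) pv.le
        have f3 : (T : ℚ) ≤ c T * T := le_mul_of_one_le_left hTpos.le (by linarith)
        linarith
      · simp only [hd, if_false] at hqv
        have hint : (At.filter (· ∣ u) ∩ At.filter (· ∣ v)).card ≤ 1 := by
          by_contra hcon
          obtain ⟨w, hw, hwu, hwv⟩ := h5' (by omega)
          rw [hins] at hw
          simp at hw
          rcases hw with rfl | rfl | rfl
          · exact hndu hwu
          · exact hd hwv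
          · exact hvu hwu
        have hcu := Finset.card_union_add_card_inter (At.filter (· ∣ u)) (At.filter (· ∣ v))
        have hsub : At.filter (· ∣ u) ∪ At.filter (· ∣ v) ⊆ At :=
          Finset.union_subset (Finset.filter_subset _ _) (Finset.filter_subset _ _)
        have hcs := Finset.card_le_card hsub
        have f1 : (u : ℚ) ≤ c u * u := le_mul_of_one_le_left pu.le (by linarith)
        have f2 : (v : ℚ) ≤ c v * v := le_mul_of_one_le_left pv.le (by linarith)
        by_cases hk : (At.filter (· ∣ u)).card + (At.filter (· ∣ v)).card ≤ At.card
        · have hk' : ((At.filter (· ∣ u)).card : ℚ) + (At.filter (· ∣ v)).card ≤ At.card := by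
            exact_mod_cast hk
          have f3 : (T : ℚ) ≤ c T * T := le_mul_of_one_le_left hTpos.le (by linarith)
          linarith
        · have hU : At.filter (· ∣ u) ∪ At.filter (· ∣ v) = At :=
            Finset.eq_of_subset_of_card_le hsub (by omega)
          have hk2 : (At.filter (· ∣ u)).card + (At.filter (· ∣ v)).card ≤ At.card + 1 := by omega
          have hk' : ((At.filter (· ∣ u)).card : ℚ) + (At.filter (· ∣ v)).card ≤ At.card + 1 := by
            exact_mod_cast hk2
          have f3 : 0 ≤ c T * T := mul_nonneg (by linarith) hTpos.le
          have hsU := Finset.sum_union_inter (s₁ := At.filter (· ∣ u)) (s₂ := At.filter (· ∣ v))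
            (f := fun a : ℕ => (a : ℚ))
          rw [hU] at hsU
          have hi : 0 ≤ ∑ a ∈ At.filter (· ∣ u) ∩ At.filter (· ∣ v), (a : ℚ) :=
            Finset.sum_nonneg (fun a _ => Nat.cast_nonneg a)
          linarith
    by_cases hvu : v ∣ u
    · have huv' : ¬ u ∣ v := fun h => huv (Nat.dvd_antisymm h hvu)
      rw [Finset.pair_comm] at hins hTn
      exact main v u huv.symm hins hTn huv'
    · exact main u v huv hins hTn hvu
  · have hm3 : At.card ≤ 3 := by omega
    have hcR' : ∀ u ∈ R', (At.filter (· ∣ u)).card = 2 := by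
      intro u hu
      have a1 := (hprop u (hm u hu).1 (hm u hu).2).1
      have a2 := h2 u (hm u hu).1
      omega
    have hA3 : At.card = 3 := by
      obtain ⟨u, hu⟩ := Finset.card_pos.mp (show 0 < R'.card by omega)
      have a1 := (hprop u (hm u hu).1 (hm u hu).2).1
      have a2 := h2 u (hm u hu).1
      omega
    have hinc : ∀ u ∈ R', ∀ v ∈ R', u ∣ v → u = v := by
      intro u hu v hv hd
      apply Nat.dvd_antisymm hd
      apply h4 v (hm v hv).1 u (hm u hu).1
      have hs : At.filter (· ∣ u) ⊆ At.filter (· ∣ v) := by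
        intro a ha
        simp at ha ⊢
        exact ⟨ha.1, ha.2.trans hd⟩
      rw [Finset.eq_of_subset_of_card_le hs (by rw [hcR' u hu, hcR' v hv])]
    have hc1 : ∀ u ∈ R', c u = 1 := by
      intro u hu
      have hq := h1 u (hm u hu).1
      rw [hcR' u hu, hins, Finset.sum_insert hTn,
        if_neg (hprop u (hm u hu).1 (hm u hu).2).2, Finset.sum_eq_single u] at hq
      · simp at hq; linarith
      · intro b hb hbu
        rw [if_neg]
        exact fun h => hbu (hinc b hb u hu h)
      · exact fun h => absurd hu h
    have hcT : c T = -1 := by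
      rw [hins, Finset.sum_insert hTn, if_pos dvd_rfl,
        Finset.sum_congr rfl (g := fun _ => (1 : ℚ))] at hqT
      · simp [h, hA3] at hqT; linarith
      · intro u hu
        rw [if_pos (hRT u (hm u hu).1), hc1 u hu]
    have hs3 := aux_sum_lt T (hodd T hT) R'
      (fun d hd => ⟨hRT d (hm d hd).1, (hm d hd).2⟩) (by omega)
    have hA1 : (3 : ℚ) ≤ ∑ a ∈ At, (a : ℚ) := by
      have : ∑ a ∈ At, (1 : ℚ) ≤ ∑ a ∈ At, (a : ℚ) :=
        Finset.sum_le_sum (fun a ha => by exact_mod_cast hapos a ha)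
      simpa [hA3] using this
    have hs4 : ∑ u ∈ R', c u * u = ∑ u ∈ R', (u : ℚ) :=
      Finset.sum_congr rfl (fun u hu => by rw [hc1 u hu, one_mul])
    rw [hins, Finset.sum_insert hTn, hcT, hs4]
    intro h0
    linarith

lemma aux_L (L : Finset ℕ) (c : ℕ → ℚ) (h1L : 1 ∈ L) (hodd : ∀ z ∈ L, Odd z)
    (hlcm : ∀ z ∈ L, ∀ w ∈ L, Nat.lcm z w ∈ L) (hcard : L.card ≤ 8)
    (hc : ∀ z ∈ L, ∑ w ∈ L, (if w ∣ z then c w else 0) = if z = 1 then 1 else 0) :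
    ∑ z ∈ L, c z * z ≠ 0 := by
  classical
  obtain ⟨At, hAt⟩ : ∃ At : Finset ℕ, ∀ z, z ∈ At ↔
      (z ∈ L ∧ z ≠ 1 ∧ ∀ w ∈ L, w ∣ z → w = 1 ∨ w = z) :=
    ⟨L.filter (fun z => z ≠ 1 ∧ ∀ w ∈ L, w ∣ z → w = 1 ∨ w = z), by intro z; simp⟩
  have hlcmL : ∀ B : Finset ℕ, B ⊆ At → B.lcm id ∈ L := by
    intro B
    induction B using Finset.induction_on with
    | empty => intro _; simpa using h1L
    | insert a B ha ih =>
      intro h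
      rw [Finset.lcm_insert]
      exact hlcm a ((hAt a).1 (h (Finset.mem_insert_self _ _))).1 _
        (ih (fun b hb => h (Finset.mem_insert_of_mem hb)))
  obtain ⟨J, hJ⟩ : ∃ J : ℕ → ℕ, ∀ z, J z = (At.filter (· ∣ z)).lcm id := ⟨_, fun _ => rfl⟩
  have hJL : ∀ z, J z ∈ L := fun z => by rw [hJ]; exact hlcmL _ (Finset.filter_subset _ _)
  have hJd : ∀ z, J z ∣ z := fun z => by
    rw [hJ]; apply Finset.lcm_dvd
    intro b hb; simp at hb; exact hb.2
  have hJm : ∀ w z, w ∣ z → J w ∣ J z := fun w z h => by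
    rw [hJ, hJ]; apply Finset.lcm_mono
    intro b hb; simp at hb ⊢; exact ⟨hb.1, hb.2.trans h⟩
  have haJ : ∀ a ∈ At, ∀ z, a ∣ z → a ∣ J z := fun a ha z h => by
    rw [hJ]; exact Finset.dvd_lcm (f := id) (by simp [ha, h])
  have hat : ∀ z, z ∈ L → z ≠ 1 → ∃ a ∈ At, a ∣ z := by
    intro z
    induction z using Nat.strong_induction_on with
    | _ z ih =>
      intro hz h1
      by_cases hA : z ∈ At
      · exact ⟨z, hA, dvd_rfl⟩
      · have : ∃ w ∈ L, w ∣ z ∧ w ≠ 1 ∧ w ≠ z := by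
          by_contra hcon
          push Not at hcon
          apply hA
          rw [hAt]
          refine ⟨hz, h1, fun w hw hd => ?_⟩
          by_cases hw1 : w = 1
          · exact Or.inl hw1
          · exact Or.inr (hcon w hw hd hw1)
        obtain ⟨w, hw, hd, hw1, hwz⟩ := this
        have hlt : w < z := lt_of_le_of_ne (Nat.le_of_dvd (hodd z hz).pos hd) hwz
        obtain ⟨a, ha, had⟩ := ih w hlt hw hw1
        exact ⟨a, ha, had.trans hd⟩
  have hJ1 : J 1 = 1 := Nat.dvd_one.mp (hJd 1)
  have hc0 : ∀ z, z ∈ L → J z ≠ z → c z = 0 := by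
    intro z
    induction z using Nat.strong_induction_on with
    | _ z ih =>
      intro hz hne
      have hz1 : z ≠ 1 := by rintro rfl; exact hne hJ1
      have hJz1 : J z ≠ 1 := by
        obtain ⟨a, ha, had⟩ := hat z hz hz1
        intro h
        have := haJ a ha z had
        rw [h] at this
        exact ((hAt a).1 ha).2.1 (Nat.dvd_one.mp this)
      have q1 := hc z hz
      have q2 := hc (J z) (hJL z)
      rw [if_neg hz1] at q1
      rw [if_neg hJz1] at q2
      have q3 : ∑ w ∈ L, ((if w ∣ z then c w else 0) - (if w ∣ J z then c w else 0)) = c z := by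
        rw [Finset.sum_eq_single z]
        · rw [if_pos dvd_rfl, if_neg, sub_zero]
          exact fun h => hne (Nat.dvd_antisymm (hJd z) h)
        · intro w hw hwz
          by_cases h1 : w ∣ J z
          · rw [if_pos h1, if_pos (h1.trans (hJd z)), sub_self]
          · rw [if_neg h1]
            by_cases h2 : w ∣ z
            · rw [if_pos h2, sub_zero]
              apply ih w (lt_of_le_of_ne (Nat.le_of_dvd (hodd z hz).pos h2) hwz) hw
              intro h
              apply h1
              rw [← h]
              exact hJm w z h2
            · rw [if_neg h2, sub_zero]
        · exact fun h => absurd hz h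
      rw [Finset.sum_sub_distrib, q1, q2] at q3
      rw [← q3, sub_zero]
  obtain ⟨R, hR⟩ : ∃ R : Finset ℕ, ∀ z, z ∈ R ↔ (z ∈ L ∧ z ≠ 1 ∧ z ∉ At ∧ J z = z) :=
    ⟨L.filter (fun z => z ≠ 1 ∧ z ∉ At ∧ J z = z), by intro z; simp⟩
  have hdisj : Disjoint At R := by
    rw [Finset.disjoint_left]
    intro a ha hr
    exact ((hR a).1 hr).2.2.1 ha
  have h1n : 1 ∉ At ∪ R := by
    rw [Finset.mem_union]
    rintro (h | h)
    · exact ((hAt 1).1 h).2.1 rfl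
    · exact ((hR 1).1 h).2.1 rfl
  have hsub : insert 1 (At ∪ R) ⊆ L := by
    intro z hz
    rw [Finset.mem_insert, Finset.mem_union] at hz
    rcases hz with rfl | h | h
    · exact h1L
    · exact ((hAt z).1 h).1
    · exact ((hR z).1 h).1
  have hcard' : At.card + R.card ≤ 7 := by
    have := Finset.card_le_card hsub
    rw [Finset.card_insert_of_notMem h1n, Finset.card_union_of_disjoint hdisj] at this
    omega
  have hdec : ∀ g : ℕ → ℚ, (∀ z, c z = 0 → g z = 0) →
      ∑ z ∈ L, g z = g 1 + (∑ a ∈ At, g a + ∑ r ∈ R, g r) := by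
    intro g hg
    rw [← Finset.sum_union hdisj, ← Finset.sum_insert h1n]
    symm
    apply Finset.sum_subset hsub
    intro z hz hn
    apply hg
    apply hc0 z hz
    intro h
    apply hn
    rw [Finset.mem_insert, Finset.mem_union, hR]
    tauto
  have c1 : c 1 = 1 := by
    have q := hc 1 h1L
    rw [Finset.sum_eq_single 1] at q
    · simpa using q
    · intro b _ hb
      rw [if_neg]
      exact fun h => hb (Nat.dvd_one.mp h)
    · exact fun h => absurd h1L h
  have ca : ∀ a ∈ At, c a = -1 := by
    intro a ha
    obtain ⟨haL, ha1, hap⟩ := (hAt a).1 ha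
    have q := hc a haL
    rw [if_neg ha1, ← Finset.sum_subset (s₁ := {1, a})] at q
    · rw [Finset.sum_pair (Ne.symm ha1)] at q
      simp [c1] at q
      linarith
    · intro z hz
      simp at hz
      rcases hz with rfl | rfl <;> assumption
    · intro z hz hn
      rw [if_neg]
      intro h
      apply hn
      simp
      exact hap z hz h
  have hBR : ∀ B : Finset ℕ, B ⊆ At → 2 ≤ B.card → B.lcm id ∈ R := by
    intro B hB h2
    have hdv : ∀ b ∈ B, b ∣ B.lcm id := fun b hb => Finset.dvd_lcm (f := id) hb
    obtain ⟨a, ha, b, hb, hab⟩ := Finset.one_lt_card.mp h2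
    have hna : B.lcm id ∉ At := by
      intro h
      obtain ⟨_, _, h3⟩ := (hAt _).1 h
      have ha' := (hAt a).1 (hB ha)
      have hb' := (hAt b).1 (hB hb)
      have e1 := (h3 a ha'.1 (hdv a ha)).resolve_left ha'.2.1
      have e2 := (h3 b hb'.1 (hdv b hb)).resolve_left hb'.2.1
      exact hab (e1.trans e2.symm)
    rw [hR]
    refine ⟨hlcmL B hB, ?_, hna, ?_⟩
    · intro h
      have := hdv a ha
      rw [h] at this
      exact ((hAt a).1 (hB ha)).2.1 (Nat.dvd_one.mp this)
    · apply Nat.dvd_antisymm (hJd _)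
      apply Finset.lcm_dvd
      intro b hb
      exact haJ b (hB hb) _ (hdv b hb)
  have h2 : ∀ r ∈ R, 2 ≤ (At.filter (· ∣ r)).card := by
    intro r hr
    obtain ⟨hrL, hr1, hrA, hrJ⟩ := (hR r).1 hr
    by_contra hcon
    have hle : (At.filter (· ∣ r)).card ≤ 1 := by omega
    obtain ⟨a, ha, had⟩ := hat r hrL hr1
    have hs : At.filter (· ∣ r) = {a} := by
      rw [Finset.card_le_one] at hle
      ext b
      simp only [Finset.mem_singleton]
      constructor
      · intro hb
        exact hle b hb a (by simp [ha, had])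
      · rintro rfl; simp [ha, had]
    rw [hJ, hs] at hrJ
    simp at hrJ
    rw [hrJ] at ha
    exact hrA ha
  have hV : ∑ z ∈ L, c z * z = 1 - ∑ a ∈ At, (a : ℚ) + ∑ r ∈ R, c r * r := by
    rw [hdec (fun z => c z * z) (fun z h => by simp [h])]
    have : ∑ a ∈ At, c a * a = - ∑ a ∈ At, (a : ℚ) := by
      rw [← Finset.sum_neg_distrib]
      exact Finset.sum_congr rfl (fun a ha => by rw [ca a ha]; ring)
    rw [this, c1]
    push_cast
    ring
  rw [hV]
  by_cases hA2 : 2 ≤ At.card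
  · apply aux_core At R (At.lcm id) c
    · exact hBR At (Finset.Subset.refl _) hA2
    · intro r hr
      rw [← ((hR r).1 hr).2.2.2, hJ]
      exact Finset.lcm_mono (Finset.filter_subset _ _)
    · intro a ha
      exact Finset.dvd_lcm (f := id) ha
    · intro r hr
      exact hodd r ((hR r).1 hr).1
    · exact hdisj
    · intro a ha
      exact (hodd a ((hAt a).1 ha).1).pos
    · exact hcard'
    · intro r hr
      have q := hc r ((hR r).1 hr).1
      rw [if_neg ((hR r).1 hr).2.1, hdec _ (fun z h => by simp [h])] at q
      have : ∑ a ∈ At, (if a ∣ r then c a else 0) = - ((At.filter (· ∣ r)).card : ℚ) := by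
        rw [← Finset.sum_filter, Finset.sum_congr rfl (g := fun _ => (-1 : ℚ))]
        · simp
        · intro a ha
          exact ca a (Finset.mem_filter.mp ha).1
      rw [this, if_pos (one_dvd r), c1] at q
      linarith
    · exact h2
    · intro r hr s hs h
      rw [← ((hR r).1 hr).2.2.2, ← ((hR s).1 hs).2.2.2, hJ, hJ]
      exact Finset.lcm_mono h
    · intro u hu v hv h
      refine ⟨_, hBR _ (Finset.inter_subset_left.trans (Finset.filter_subset _ _)) h, ?_, ?_⟩
      · apply Finset.lcm_dvd
        intro b hb
        simp at hb
        exact hb.1.2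
      · apply Finset.lcm_dvd
        intro b hb
        simp at hb
        exact hb.2.2
  · have hRe : R = ∅ := by
      rw [Finset.eq_empty_iff_forall_notMem]
      intro r hr
      have a1 := h2 r hr
      have a2 := Finset.card_filter_le At (· ∣ r)
      omega
    rw [hRe]
    rcases (show At.card = 0 ∨ At.card = 1 by omega) with h | h
    · rw [Finset.card_eq_zero] at h
      simp [h]
    · obtain ⟨a, rfl⟩ := Finset.card_eq_one.mp h
      have : (a : ℚ) ≠ 1 := by exact_mod_cast ((hAt a).1 (by simp)).2.1
      simp
      intro h0
      apply this
      linarith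

/-- If `S` is a GCD closed set of odd positive integers with at most 8 elements,
then the LCM matrix `[lcm (x i) (x j)]` is nonsingular. -/
theorem stmt_6 (n : ℕ) (hn : n ≤ 8) (x : Fin n → ℕ)
    (hodd : ∀ i, Odd (x i)) (hpos : ∀ i, 0 < x i) (hinj : Function.Injective x)
    (hgcd : ∀ i j, ∃ k, x k = Nat.gcd (x i) (x j)) :
    (Matrix.of fun i j => (Nat.lcm (x i) (x j) : ℤ)).det ≠ 0 := by
  classical
  set E : Matrix (Fin n) (Fin n) ℚ := Matrix.of fun i j => if x j ∣ x i then 1 else 0 with hE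
  have hEd : E.det ≠ 0 := by
    intro h0
    obtain ⟨v, hv, hEv⟩ := Matrix.exists_mulVec_eq_zero_iff.mpr h0
    have hne : (Finset.univ.filter (fun i => v i ≠ 0)).Nonempty := by
      obtain ⟨i, hi⟩ := Function.ne_iff.mp hv
      exact ⟨i, by simpa using hi⟩
    obtain ⟨i, hi, hmin⟩ := Finset.exists_min_image _ x hne
    have q := congrFun hEv i
    simp only [Matrix.mulVec, dotProduct, hE, Matrix.of_apply, Pi.zero_apply] at q
    rw [Finset.sum_eq_single i] at q
    · simp at q hi
      exact hi q
    · intro j _ hji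
      by_cases hd : x j ∣ x i
      · have hlt : x j < x i := lt_of_le_of_ne (Nat.le_of_dvd (hpos i) hd) (fun h => hji (hinj h))
        have : v j = 0 := by
          by_contra hvj
          have := hmin j (by simpa using hvj)
          omega
        rw [this, mul_zero]
      · rw [if_neg hd, zero_mul]
    · simp
  have hEu : IsUnit E.det := isUnit_iff_ne_zero.mpr hEd
  set α : Fin n → ℚ := E⁻¹.mulVec (fun i => 1 / (x i : ℚ)) with hα
  have hEα : ∀ i, ∑ k, E i k * α k = 1 / (x i : ℚ) := by
    intro i
    have : E.mulVec α = fun i => 1 / (x i : ℚ) := by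
      rw [hα, Matrix.mulVec_mulVec, Matrix.mul_nonsing_inv _ hEu, Matrix.one_mulVec]
    exact congrFun this i
  have hα0 : ∀ k, α k ≠ 0 := by
    intro k
    set c : Fin n → ℚ := fun j => E⁻¹ k j with hcdef
    have hαk : α k = ∑ j, c j * (1 / (x j : ℚ)) := rfl
    have hcE : ∀ i, ∑ j, (if x i ∣ x j then c j else 0) = if i = k then 1 else 0 := by
      intro i
      have h := congrFun (congrFun (Matrix.nonsing_inv_mul _ hEu) k) i
      rw [Matrix.mul_apply, Matrix.one_apply] at h
      simp only [hE, Matrix.of_apply, mul_ite, mul_one, mul_zero] at h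
      rw [show (if i = k then (1 : ℚ) else 0) = if k = i then 1 else 0 by simp only [eq_comm], ← h]
    have hsupp : ∀ j, ¬ x j ∣ x k → c j = 0 := by
      by_contra hcon
      push Not at hcon
      obtain ⟨j0, hj0, hcj0⟩ := hcon
      have hne : (Finset.univ.filter (fun j => ¬ x j ∣ x k ∧ c j ≠ 0)).Nonempty :=
        ⟨j0, by simp [hj0, hcj0]⟩
      obtain ⟨j, hj, hmax⟩ := Finset.exists_max_image _ x hne
      simp only [Finset.mem_filter, Finset.mem_univ, true_and] at hj hmax
      have q := hcE j
      rw [Finset.sum_eq_single j, if_pos dvd_rfl, if_neg] at q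
      · exact hj.2 q
      · rintro rfl; exact hj.1 dvd_rfl
      · intro i _ hij
        by_cases hd : x j ∣ x i
        · rw [if_pos hd]
          by_contra hci
          have h1 := hmax i ⟨fun h => hj.1 (hd.trans h), hci⟩
          have h2 := Nat.le_of_dvd (hpos i) hd
          exact hij (hinj (le_antisymm h1 h2))
        · rw [if_neg hd]
      · simp
    let D := {j : Fin n // x j ∣ x k}
    let z : D → ℕ := fun j => x k / x j.1
    have hz : ∀ j : D, x j.1 * z j = x k := fun j => Nat.mul_div_cancel' j.2
    have hzi : Function.Injective z := by
      intro i j h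
      have h1 := (hz i).trans (hz j).symm
      rw [h] at h1
      have hzp : 0 < z j := Nat.pos_of_ne_zero (fun h0 => by
        have := hz j
        rw [h0, mul_zero] at this
        have := hpos k
        omega)
      exact Subtype.ext (hinj (Nat.eq_of_mul_eq_mul_right hzp h1))
    have hzd : ∀ i j : D, z i ∣ z j ↔ x j.1 ∣ x i.1 := by
      intro i j
      constructor
      · rintro ⟨t, ht⟩
        refine ⟨t, ?_⟩
        have h1 := (hz i).trans (hz j).symm
        rw [ht, mul_comm (z i) t, ← mul_assoc] at h1
        have hzp : 0 < z i := Nat.pos_of_ne_zero (fun h0 => by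
          have := hz i
          rw [h0, mul_zero] at this
          have := hpos k
          omega)
        exact Nat.eq_of_mul_eq_mul_right hzp h1
      · rintro ⟨t, ht⟩
        refine ⟨t, ?_⟩
        have h1 := (hz i).trans (hz j).symm
        rw [ht, mul_assoc] at h1
        rw [← Nat.eq_of_mul_eq_mul_left (hpos _) h1, mul_comm]
    have hsumD : ∀ f : Fin n → ℚ, (∀ j, c j = 0 → f j = 0) → ∑ j : D, f j.1 = ∑ j, f j := by
      intro f hf
      rw [← Finset.sum_subtype (Finset.univ.filter (fun j => x j ∣ x k)) (by simp) f]
      apply Finset.sum_subset (Finset.subset_univ _)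
      intro j _ hj
      apply hf
      apply hsupp
      simpa using hj
    set c' : ℕ → ℚ := Function.extend z (fun j => c j.1) 0 with hc'
    have hcz : ∀ j, c' (z j) = c j.1 := fun j => hzi.extend_apply _ _ j
    let K : D := ⟨k, dvd_rfl⟩
    have hzK : z K = 1 := Nat.div_self (hpos k)
    have hmain := aux_L (Finset.univ.image z) c' (by
        rw [Finset.mem_image]; exact ⟨K, Finset.mem_univ _, hzK⟩) (by
        intro w hw
        obtain ⟨j, -, rfl⟩ := Finset.mem_image.mp hw
        have := hodd k
        rw [← hz j] at this
        exact (Nat.odd_mul.mp this).2) (by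
        intro w hw w' hw'
        obtain ⟨i, -, rfl⟩ := Finset.mem_image.mp hw
        obtain ⟨j, -, rfl⟩ := Finset.mem_image.mp hw'
        obtain ⟨l, hl⟩ := hgcd i.1 j.1
        have hld : x l ∣ x k := by rw [hl]; exact (Nat.gcd_dvd_left _ _).trans i.2
        rw [Finset.mem_image]
        refine ⟨⟨l, hld⟩, Finset.mem_univ _, ?_⟩
        apply Nat.dvd_antisymm
        · have hd : Nat.lcm (z i) (z j) ∣ x k :=
            Nat.lcm_dvd ⟨x i.1, by rw [mul_comm]; exact (hz i).symm⟩
              ⟨x j.1, by rw [mul_comm]; exact (hz j).symm⟩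
          obtain ⟨t, ht⟩ := hd
          have hlp : 0 < Nat.lcm (z i) (z j) := Nat.pos_of_ne_zero (fun h0 => by
            rw [h0, zero_mul] at ht
            have := hpos k
            omega)
          have ti : t ∣ x i.1 := by
            obtain ⟨s, hs⟩ := Nat.dvd_lcm_left (z i) (z j)
            refine ⟨s, ?_⟩
            have h1 := (hz i).trans ht
            have hzp : 0 < z i := Nat.pos_of_ne_zero (fun h0 => by
              rw [hs, h0, zero_mul] at hlp; omega)
            rw [hs] at h1
            apply Nat.eq_of_mul_eq_mul_right hzp
            rw [h1]; ring
          have tj : t ∣ x j.1 := by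
            obtain ⟨s, hs⟩ := Nat.dvd_lcm_right (z i) (z j)
            refine ⟨s, ?_⟩
            have h1 := (hz j).trans ht
            have hzp : 0 < z j := Nat.pos_of_ne_zero (fun h0 => by
              rw [hs, h0, zero_mul] at hlp; omega)
            rw [hs] at h1
            apply Nat.eq_of_mul_eq_mul_right hzp
            rw [h1]; ring
          have tl : t ∣ x l := by rw [hl]; exact Nat.dvd_gcd ti tj
          obtain ⟨s, hs⟩ := tl
          refine ⟨s, ?_⟩
          have h1 := (hz ⟨l, hld⟩).trans ht
          have htp : 0 < t := Nat.pos_of_ne_zero (fun h0 => by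
            rw [h0, mul_zero] at ht
            have := hpos k
            omega)
          change x l * _ = _ at h1
          apply Nat.eq_of_mul_eq_mul_left htp
          rw [mul_comm t (Nat.lcm _ _), ← h1, mul_comm (z _) s, ← mul_assoc, ← hs]
        · apply Nat.lcm_dvd
          · rw [hzd]; change x l ∣ _; rw [hl]; exact Nat.gcd_dvd_left _ _
          · rw [hzd]; change x l ∣ _; rw [hl]; exact Nat.gcd_dvd_right _ _) (by
        refine Finset.card_image_le.trans ?_
        refine le_trans ?_ hn
        have := Fintype.card_subtype_le (fun j : Fin n => x j ∣ x k)
        rwa [Fintype.card_fin] at this) (by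
        intro w hw
        obtain ⟨i, -, rfl⟩ := Finset.mem_image.mp hw
        rw [Finset.sum_image (fun a _ b _ h => hzi h)]
        simp only [hcz, hzd]
        rw [hsumD (fun j => if x i.1 ∣ x j then c j else 0) (fun j h => by simp [h]), hcE]
        have : i.1 = k ↔ z i = 1 := by
          rw [← hzK, hzi.eq_iff]
          exact ⟨fun h => Subtype.ext h, fun h => congrArg Subtype.val h⟩
        simp only [this])
    rw [Finset.sum_image (fun a _ b _ h => hzi h)] at hmain
    simp only [hcz] at hmain
    intro h0
    apply hmain
    have hxz : ∀ j : D, c j.1 * (z j : ℚ) = x k * (c j.1 * (1 / (x j.1 : ℚ))) := by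
      intro j
      have h1 : (x k : ℚ) = x j.1 * z j := by exact_mod_cast (hz j).symm
      have h2 : (x j.1 : ℚ) ≠ 0 := by exact_mod_cast (hpos j.1).ne'
      rw [h1]; field_simp
    rw [Finset.sum_congr rfl (fun j _ => hxz j), ← Finset.mul_sum,
      hsumD (fun j => c j * (1 / (x j : ℚ))) (fun j h => by simp [h]), ← hαk, h0, mul_zero]
  -- assembly
  intro hdet
  have hmap : (Matrix.of fun i j => (Nat.lcm (x i) (x j) : ℚ)) =
      Matrix.diagonal (fun i => (x i : ℚ)) * (E * Matrix.diagonal α * E.transpose) *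
        Matrix.diagonal (fun i => (x i : ℚ)) := by
    ext i j
    rw [Matrix.mul_diagonal, Matrix.diagonal_mul, Matrix.mul_apply]
    obtain ⟨l, hl⟩ := hgcd i j
    have h1 : ∑ k, (E * Matrix.diagonal α) i k * E.transpose k j = 1 / (x l : ℚ) := by
      rw [← hEα l]
      apply Finset.sum_congr rfl
      intro k _
      rw [Matrix.mul_diagonal, Matrix.transpose_apply]
      simp only [hE, Matrix.of_apply, hl, Nat.dvd_gcd_iff]
      by_cases a : x k ∣ x i <;> by_cases b : x k ∣ x j <;> simp [a, b]
    rw [h1, Matrix.of_apply]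
    have h2 : (Nat.gcd (x i) (x j) : ℚ) * Nat.lcm (x i) (x j) = x i * x j := by
      exact_mod_cast Nat.gcd_mul_lcm (x i) (x j)
    have h3 : (x l : ℚ) ≠ 0 := by exact_mod_cast (hpos l).ne'
    rw [← hl] at h2
    field_simp
    linarith
  have hdq : (Matrix.of fun i j => (Nat.lcm (x i) (x j) : ℚ)).det = 0 := by
    have h := congrArg (Int.castRingHom ℚ) hdet
    rw [RingHom.map_det, map_zero] at h
    rw [← h]
    congr 1
  rw [hmap] at hdq
  simp only [Matrix.det_mul, Matrix.det_diagonal, Matrix.det_transpose, mul_eq_zero,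
    Finset.prod_eq_zero_iff, Finset.mem_univ, true_and, hEd, hα0, exists_false, or_false,
    Nat.cast_eq_zero, (hpos _).ne'] at hdq
end

section
/- Let S = {x_1, …, x_n} be a set of distinct positive integers forming a chain under divisibility, i.e. x_1 | x_2 | … | x_n with x_1 < x_2 < … < x_n. Then for every real number α > 0, the power LCM matrix [S]_{N^α} with ij-entry lcm(x_i, x_j)^α is nonsingular (its determinant is nonzero). -/
theorem max_aux : ∀ (n : ℕ) (a : Fin n → ℝ) (_ : ∀ i, 0 < a i) (_ : StrictMono a)
    (v : Fin n → ℝ) (_ : ∀ i, ∑ j, a (max i j) * v j = 0), v = 0 := by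
  intro n
  induction n with
  | zero => intro a _ _ v _; exact Subsingleton.elim _ _
  | succ n ih =>
    intro a ha hm v h
    have h0 : v 0 = 0 := by
      cases n with
      | zero =>
        have := h 0
        simp at this
        rcases this with h1 | h1
        · exact absurd h1 (ha 0).ne'
        · exact h1
      | succ m =>
        have e0 := h 0
        have e1 := h 1
        rw [Fin.sum_univ_succ] at e0 e1
        have e : ∀ j : Fin (m+1), a (max 1 j.succ) = a (max 0 j.succ) := by
          intro j
          congr 1
        simp only [e] at e1
        rw [max_self] at e0
        rw [max_eq_left (Fin.zero_le _)] at e1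
        have hlt : a 0 < a 1 := hm (by simp)
        have : (a 1 - a 0) * v 0 = 0 := by linarith
        rcases mul_eq_zero.mp this with h1 | h1
        · linarith
        · exact h1
    have ht := ih (fun i => a i.succ) (fun i => ha _)
      (fun i j hij => hm (Fin.succ_lt_succ_iff.mpr hij)) (fun i => v i.succ) (by
        intro i
        have := h i.succ
        rw [Fin.sum_univ_succ, h0, mul_zero, zero_add] at this
        rw [← this]
        refine Finset.sum_congr rfl fun j _ => ?_
        congr 2
        exact (Fin.strictMono_succ.monotone.map_max))
    funext i
    refine Fin.cases h0 (fun j => congrFun ht j) i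

/-- If `x 0 < x 1 < ⋯ < x (n-1)` are positive integers forming a chain under divisibility,
then for every real `α > 0` the power LCM matrix `[lcm (x i) (x j) ^ α]` is nonsingular. -/
theorem stmt_8 (n : ℕ) (x : Fin n → ℕ) (hpos : ∀ i, 0 < x i)
    (hmono : StrictMono x) (hchain : ∀ i j : Fin n, i ≤ j → x i ∣ x j)
    (α : ℝ) (hα : 0 < α) :
    (Matrix.of fun i j => (Nat.lcm (x i) (x j) : ℝ) ^ α).det ≠ 0 := by
  intro hdet
  obtain ⟨v, hv, h⟩ := Matrix.exists_mulVec_eq_zero_iff.mpr hdet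
  apply hv
  refine max_aux n (fun i => (x i : ℝ) ^ α)
    (fun i => Real.rpow_pos_of_pos (by exact_mod_cast hpos i) α)
    (fun i j hij => Real.rpow_lt_rpow (by positivity) (by exact_mod_cast hmono hij) hα) v ?_
  intro i
  have hi := congrFun h i
  simp only [Matrix.mulVec, dotProduct, Matrix.of_apply, Pi.zero_apply] at hi
  rw [← hi]
  refine Finset.sum_congr rfl fun j _ => ?_
  have : x (max i j) = Nat.lcm (x i) (x j) := by
    rcases le_total i j with hij | hij
    · rw [max_eq_right hij, Nat.lcm_eq_right (hchain i j hij)]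
    · rw [max_eq_left hij, Nat.lcm_eq_left (hchain j i hij)]
  rw [this]
end

section
/- Let S = {x_1, x_2, x_3, x_4} = {1, 3, 5, 45}. There exists a real number α_0 > 0 such that the 4×4 power LCM matrix with ij-entry lcm(x_i, x_j)^{α_0} is singular, i.e. has determinant 0. -/
/-- For `S = {1, 3, 5, 45}` there is a real `α₀ > 0` such that the power LCM matrix
`[lcm (x i) (x j) ^ α₀]` is singular. -/
theorem stmt_9 :
    ∃ α₀ : ℝ, 0 < α₀ ∧
      (Matrix.of fun i j =>
        (Nat.lcm (![1, 3, 5, 45] i) (![1, 3, 5, 45] j) : ℝ) ^ α₀).det = 0 := by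
  have hc : ContinuousOn (fun t : ℝ => (3:ℝ)^t * (5:ℝ)^t - (3:ℝ)^t - 1) (Set.Icc (1/4) 1) := by
    have h3 : Continuous (fun t : ℝ => (3:ℝ)^t) :=
      Real.continuous_const_rpow (by norm_num)
    have h5 : Continuous (fun t : ℝ => (5:ℝ)^t) :=
      Real.continuous_const_rpow (by norm_num)
    exact (((h3.mul h5).sub h3).sub continuous_const).continuousOn
  have h0 : (0:ℝ) ∈ Set.Icc ((3:ℝ)^(1/4:ℝ) * (5:ℝ)^(1/4:ℝ) - (3:ℝ)^(1/4:ℝ) - 1)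
      ((3:ℝ)^(1:ℝ) * (5:ℝ)^(1:ℝ) - (3:ℝ)^(1:ℝ) - 1) := by
    constructor
    · have ha : ((3:ℝ)^(1/4:ℝ))^4 = 3 := by
        rw [← Real.rpow_natCast, ← Real.rpow_mul (by norm_num)]; norm_num
      have hb : ((5:ℝ)^(1/4:ℝ))^4 = 5 := by
        rw [← Real.rpow_natCast, ← Real.rpow_mul (by norm_num)]; norm_num
      have ha0 : 0 < (3:ℝ)^(1/4:ℝ) := by positivity
      have ha2 : (3:ℝ)^(1/4:ℝ) < 2 :=
        lt_of_pow_lt_pow_left₀ 4 (by norm_num) (by rw [ha]; norm_num)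
      have hb2 : (5:ℝ)^(1/4:ℝ) < 3/2 :=
        lt_of_pow_lt_pow_left₀ 4 (by norm_num) (by rw [hb]; norm_num)
      nlinarith
    · norm_num
  obtain ⟨t, ht, hz⟩ := intermediate_value_Icc (by norm_num) hc h0
  refine ⟨t, by linarith [ht.1], ?_⟩
  have h15 : (15:ℝ)^t = 3^t * 5^t := by
    rw [← Real.mul_rpow (by norm_num) (by norm_num)]; norm_num
  have h45 : (45:ℝ)^t = 3^t * 3^t * 5^t := by
    rw [← Real.mul_rpow (by norm_num) (by norm_num), ← Real.mul_rpow (by norm_num) (by norm_num)]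
    norm_num
  have hz' : (3:ℝ)^t * (5:ℝ)^t - (3:ℝ)^t - 1 = 0 := hz
  have hM : (Matrix.of fun i j =>
        (Nat.lcm (![1, 3, 5, 45] i) (![1, 3, 5, 45] j) : ℝ) ^ t) =
      !![1, 3^t, 5^t, 45^t; 3^t, 3^t, 15^t, 45^t; 5^t, 15^t, 5^t, 45^t;
         45^t, 45^t, 45^t, 45^t] := by
    ext i j
    fin_cases i <;> fin_cases j <;> norm_num [Nat.lcm]
  rw [hM, h15, h45]
  generalize (3:ℝ)^t = a at *
  generalize (5:ℝ)^t = b at *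
  simp [Matrix.det_succ_row_zero, Fin.sum_univ_succ, Fin.succAbove]
  linear_combination (a^3 * b^2 * (1-a)*(1-b)*(a-1)) * hz'
end

section
/- Let S' = {x_1, x_2, x_3, x_4} = {1, 3, 5, 15}. For every real number α > 0, the 4×4 power LCM matrix with ij-entry lcm(x_i, x_j)^α is nonsingular (its determinant is nonzero). -/
/-- For `S' = {1, 3, 5, 15}` and every real `α > 0` the power LCM matrix
`[lcm (x i) (x j) ^ α]` is nonsingular. -/
theorem stmt_10 (α : ℝ) (hα : 0 < α) :
    (Matrix.of fun i j =>
      (Nat.lcm (![1, 3, 5, 15] i) (![1, 3, 5, 15] j) : ℝ) ^ α).det ≠ 0 := by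
  have h3 : (1:ℝ) < 3 ^ α := Real.one_lt_rpow (by norm_num) hα
  have h5 : (1:ℝ) < 5 ^ α := Real.one_lt_rpow (by norm_num) hα
  have h15 : (15:ℝ) ^ α = 3 ^ α * 5 ^ α := by
    rw [← Real.mul_rpow (by norm_num) (by norm_num)]; norm_num
  have hM : (Matrix.of fun i j =>
      (Nat.lcm (![1, 3, 5, 15] i) (![1, 3, 5, 15] j) : ℝ) ^ α) =
      !![1, 3 ^ α, 5 ^ α, 3 ^ α * 5 ^ α;
         3 ^ α, 3 ^ α, 3 ^ α * 5 ^ α, 3 ^ α * 5 ^ α;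
         5 ^ α, 3 ^ α * 5 ^ α, 5 ^ α, 3 ^ α * 5 ^ α;
         3 ^ α * 5 ^ α, 3 ^ α * 5 ^ α, 3 ^ α * 5 ^ α, 3 ^ α * 5 ^ α] := by
    rw [← h15]
    ext i j
    fin_cases i <;> fin_cases j <;> norm_num [Nat.lcm]
  rw [hM]
  generalize (3:ℝ) ^ α = a at *
  generalize (5:ℝ) ^ α = b at *
  have hd : (!![1, a, b, a * b; a, a, a * b, a * b; b, a * b, b, a * b;
      a * b, a * b, a * b, a * b] : Matrix (Fin 4) (Fin 4) ℝ).det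
      = (a * (a - 1)) ^ 2 * (b * (b - 1)) ^ 2 := by
    simp [Matrix.det_succ_row_zero, Fin.sum_univ_succ, Fin.succAbove]
    ring
  rw [hd]
  have ha : 0 < a - 1 := by linarith
  have hb : 0 < b - 1 := by linarith
  have ha' : 0 < a := by linarith
  have hb' : 0 < b := by linarith
  positivity
end

section
/- Let S = {x_1, …, x_n} be a GCD closed set of positive integers and let α > 0 be a real number. Then the power LCM matrix [S]_{N^α} with ij-entry lcm(x_i, x_j)^α and the matrix (S)_{1/N^α} with ij-entry gcd(x_i, x_j)^{−α} are both nonsingular if and only if Ψ_{S,1/N^α}(x_i) ≠ 0 for all i = 1, …, n. -/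
theorem mob_sum (S : Finset ℕ) (y x : ℕ) (hx : x ∈ S) (h0 : x ≠ 0) :
    ∑ z ∈ S.filter (fun z => y ∣ z ∧ z ∣ x), mobiusOn S y z = if y = x then 1 else 0 := by
  by_cases hxy : y = x
  · subst hxy
    have : S.filter (fun z => y ∣ z ∧ z ∣ y) = {y} := by
      ext z
      simp only [Finset.mem_filter, Finset.mem_singleton]
      constructor
      · rintro ⟨_, h1, h2⟩
        exact Nat.dvd_antisymm h2 h1
      · rintro rfl
        exact ⟨hx, dvd_rfl, dvd_rfl⟩
    rw [this, Finset.sum_singleton, mobiusOn]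
    simp
  · rw [if_neg hxy]
    by_cases hd : y ∣ x
    · have : S.filter (fun z => y ∣ z ∧ z ∣ x)
          = insert x (S.filter fun z => y ∣ z ∧ z ∣ x ∧ z ≠ x) := by
        ext z
        simp only [Finset.mem_filter, Finset.mem_insert]
        constructor
        · rintro ⟨a, h1, h2⟩
          by_cases h : z = x
          · exact Or.inl h
          · exact Or.inr ⟨a, h1, h2, h⟩
        · rintro (rfl | ⟨a, b, c, _⟩)
          · exact ⟨hx, hd, dvd_rfl⟩
          · exact ⟨a, b, c⟩
      rw [this, Finset.sum_insert (by simp)]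
      rw [mobiusOn, if_neg (Ne.symm hxy), dif_neg h0,
        Finset.sum_attach _ (fun z => mobiusOn S y z)]
      simp
    · apply Finset.sum_eq_zero
      intro z hz
      simp only [Finset.mem_filter] at hz
      exact absurd (hz.2.1.trans hz.2.2) hd

theorem stmt_11 (n : ℕ) (x : Fin n → ℕ) (hpos : ∀ i, 0 < x i)
    (hinj : Function.Injective x)
    (hgcd : ∀ i j, ∃ k, x k = Nat.gcd (x i) (x j)) (α : ℝ) (hα : 0 < α) :
    ((Matrix.of fun i j => (Nat.lcm (x i) (x j) : ℝ) ^ α).det ≠ 0 ∧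
        (Matrix.of fun i j => (Nat.gcd (x i) (x j) : ℝ) ^ (-α)).det ≠ 0) ↔
      ∀ i, (∑ k ∈ Finset.univ.filter fun k => x k ∣ x i,
          (mobiusOn (Finset.image x Finset.univ) (x k) (x i) : ℝ) / (x k : ℝ) ^ α) ≠ 0 := by
  set P : Fin n → ℝ := fun i => ∑ k ∈ Finset.univ.filter fun k => x k ∣ x i,
          (mobiusOn (Finset.image x Finset.univ) (x k) (x i) : ℝ) / (x k : ℝ) ^ α with hP
  let E : Matrix (Fin n) (Fin n) ℝ := Matrix.of fun i m => if x i ∣ x m then 1 else 0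
  let M : Matrix (Fin n) (Fin n) ℝ := Matrix.of fun k i =>
    if x k ∣ x i then (mobiusOn (Finset.image x Finset.univ) (x k) (x i) : ℝ) else 0
  have hME : M * E = 1 := by
    ext k m
    have h := mob_sum (Finset.image x Finset.univ) (x k) (x m) (by simp) (hpos m).ne'
    rw [Finset.sum_filter, Finset.sum_image (fun a _ b _ h => hinj h)] at h
    have h' := congrArg (Int.cast : ℤ → ℝ) h
    push_cast at h'
    rw [Matrix.mul_apply, Matrix.one_apply]
    simp only [hinj.eq_iff] at h'
    rw [← h']
    apply Finset.sum_congr rfl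
    intro i _
    simp only [M, E, Matrix.of_apply]
    by_cases h1 : x k ∣ x i <;> by_cases h2 : x i ∣ x m <;> simp [h1, h2]
  have hE : E.det ≠ 0 := by
    intro h
    have := congrArg Matrix.det hME
    rw [Matrix.det_mul, h] at this
    simp at this
  have hPE : ∀ m, ∑ k, (if x k ∣ x m then P k else 0) = (x m : ℝ) ^ (-α) := by
    have h1 : P = Matrix.vecMul (fun k => (x k : ℝ) ^ (-α)) M := by
      ext i
      simp only [hP, Matrix.vecMul, dotProduct, M, Matrix.of_apply, Finset.sum_filter]
      apply Finset.sum_congr rfl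
      intro k _
      split_ifs
      · rw [Real.rpow_neg (by positivity), div_eq_inv_mul]
      · simp
    have h2 : Matrix.vecMul P E = fun k => (x k : ℝ) ^ (-α) := by
      rw [h1, Matrix.vecMul_vecMul, hME, Matrix.vecMul_one]
    intro m
    rw [← congrFun h2 m]
    simp [Matrix.vecMul, dotProduct, E]
  have hG : (Matrix.of fun i j => (Nat.gcd (x i) (x j) : ℝ) ^ (-α))
      = E.transpose * Matrix.diagonal P * E := by
    ext i j
    obtain ⟨l, hl⟩ := hgcd i j
    rw [Matrix.of_apply, ← hl, ← hPE l, Matrix.mul_apply]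
    apply Finset.sum_congr rfl
    intro k _
    rw [Matrix.mul_diagonal, hl]
    simp only [Nat.dvd_gcd_iff, E, Matrix.transpose_apply, Matrix.of_apply]
    by_cases h1 : x k ∣ x i <;> by_cases h2 : x k ∣ x j <;> simp [h1, h2]
  have hL : (Matrix.of fun i j => (Nat.lcm (x i) (x j) : ℝ) ^ α)
      = Matrix.diagonal (fun i => (x i : ℝ) ^ α) *
        (Matrix.of fun i j => (Nat.gcd (x i) (x j) : ℝ) ^ (-α)) *
        Matrix.diagonal (fun i => (x i : ℝ) ^ α) := by
    ext i j
    rw [Matrix.mul_diagonal, Matrix.diagonal_mul]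
    simp only [Matrix.of_apply]
    have hg : (0 : ℝ) < (Nat.gcd (x i) (x j) : ℝ) := by
      exact_mod_cast Nat.gcd_pos_of_pos_left _ (hpos i)
    have h : (Nat.gcd (x i) (x j) : ℝ) ^ α * (Nat.lcm (x i) (x j) : ℝ) ^ α
        = (x i : ℝ) ^ α * (x j : ℝ) ^ α := by
      rw [← Real.mul_rpow (by positivity) (by positivity),
        ← Real.mul_rpow (by positivity) (by positivity)]
      congr 1
      exact_mod_cast Nat.gcd_mul_lcm (x i) (x j)
    have hg' := (Real.rpow_pos_of_pos hg α).ne'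
    rw [Real.rpow_neg hg.le]
    field_simp
    linarith
  have hD : (Matrix.diagonal (fun i => (x i : ℝ) ^ α)).det ≠ 0 := by
    rw [Matrix.det_diagonal, Finset.prod_ne_zero_iff]
    intro i _
    exact (Real.rpow_pos_of_pos (by exact_mod_cast hpos i) α).ne'
  have hGd : (Matrix.of fun i j => (Nat.gcd (x i) (x j) : ℝ) ^ (-α)).det ≠ 0 ↔ ∀ i, P i ≠ 0 := by
    rw [hG, Matrix.det_mul, Matrix.det_mul, Matrix.det_transpose, Matrix.det_diagonal]
    simp [hE, Finset.prod_eq_zero_iff]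
  rw [hL, Matrix.det_mul, Matrix.det_mul, ← hGd]
  constructor
  · exact fun h => h.2
  · exact fun h => ⟨mul_ne_zero (mul_ne_zero hD h) hD, h⟩
end

section
/- Let (L, ⪯) be a finite meet semilattice with n elements. Assume there exist elements x, y_1, …, y_m ∈ L with m ≥ 2 such that y_1, …, y_m are exactly the elements covered by x and μ_L(y, x) > 0, where y = y_1 ∧ ⋯ ∧ y_m. Then there exist a GCD closed set S = {x_1, …, x_n} of positive integers with (S, |) order-isomorphic to (L, ⪯) and a real number α_0 > 0 such that the power LCM matrix with ij-entry lcm(x_i, x_j)^{α_0} is singular (has determinant 0). -/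
open IncidenceAlgebra

open Classical in
lemma aux_sumA {L : Type*} [SemilatticeInf L] [Fintype L] [DecidableEq L]
    [LocallyFiniteOrder L] (x w : L) :
    ∑ b, (if w ≤ b then ((mu ℤ b x : ℤ) : ℝ) else 0) = if w = x then 1 else 0 := by
  have h := sum_Icc_mu_left (𝕜 := ℤ) w x
  have h2 : ((∑ b ∈ Finset.Icc w x, mu ℤ b x : ℤ) : ℝ) = if w = x then 1 else 0 := by
    rw [h]; split_ifs <;> simp
  rw [← h2, Int.cast_sum, ← Finset.sum_filter]
  symm
  apply Finset.sum_subset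
  · intro b hb
    simp at hb ⊢
    exact hb.1
  · intro b hb hb'
    simp at hb hb'
    rw [apply_eq_zero_of_not_le (hb' hb)]
    simp

open Classical in
lemma aux_J {L : Type*} [SemilatticeInf L] [Fintype L] [DecidableEq L]
    [LocallyFiniteOrder L] (g : L → ℝ) :
    ∃ J : L → ℝ, ∀ z, g z = ∑ w, if w ≤ z then J w else 0 := by
  refine ⟨fun w => ∑ v, ((mu ℤ v w : ℤ) : ℝ) * g v, fun z => ?_⟩
  have key : ∀ v, ∑ w, (if w ≤ z then ((mu ℤ v w : ℤ) : ℝ) else 0) = if v = z then 1 else 0 := by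
    intro v
    have h := sum_Icc_mu_right (𝕜 := ℤ) v z
    have h2 : ((∑ b ∈ Finset.Icc v z, mu ℤ v b : ℤ) : ℝ) = if v = z then 1 else 0 := by
      rw [h]; split_ifs <;> simp
    rw [← h2, Int.cast_sum, ← Finset.sum_filter]
    symm
    apply Finset.sum_subset
    · intro b hb
      simp at hb ⊢
      exact hb.2
    · intro b hb hb'
      simp at hb hb'
      rw [apply_eq_zero_of_not_le (fun h => hb' h hb)]
      simp
  calc g z = ∑ v, (if v = z then 1 else 0) * g v := by simp
    _ = ∑ v, (∑ w, (if w ≤ z then ((mu ℤ v w : ℤ) : ℝ) else 0)) * g v := by simp_rw [key]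
    _ = ∑ v, ∑ w, (if w ≤ z then ((mu ℤ v w : ℤ) : ℝ) * g v else 0) := by
        simp_rw [Finset.sum_mul, ite_mul, zero_mul]
    _ = ∑ w, ∑ v, (if w ≤ z then ((mu ℤ v w : ℤ) : ℝ) * g v else 0) := Finset.sum_comm
    _ = _ := by
        refine Finset.sum_congr rfl fun w _ => ?_
        split_ifs <;> simp

open Classical in
lemma aux_ker {L : Type*} [SemilatticeInf L] [Fintype L] [DecidableEq L]
    [LocallyFiniteOrder L] (x : L) (g : L → ℝ)
    (h0 : ∑ b, ((mu ℤ b x : ℤ) : ℝ) * g b = 0) (a : L) :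
    ∑ b, ((mu ℤ b x : ℤ) : ℝ) * g (a ⊓ b) = 0 := by
  obtain ⟨J, hJ⟩ := aux_J g
  have key : ∀ P : L → Prop, ∑ b, ((mu ℤ b x : ℤ) : ℝ) * (∑ w, if P w ∧ w ≤ b then J w else 0)
      = if P x then J x else 0 := by
    intro P
    calc _ = ∑ b, ∑ w, ((mu ℤ b x : ℤ) : ℝ) * (if P w ∧ w ≤ b then J w else 0) := by
            simp_rw [Finset.mul_sum]
      _ = ∑ w, ∑ b, ((mu ℤ b x : ℤ) : ℝ) * (if P w ∧ w ≤ b then J w else 0) := Finset.sum_comm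
      _ = ∑ w, (if P w then J w else 0) * ∑ b, (if w ≤ b then ((mu ℤ b x : ℤ) : ℝ) else 0) := by
            refine Finset.sum_congr rfl fun w _ => ?_
            rw [Finset.mul_sum]
            refine Finset.sum_congr rfl fun b _ => ?_
            by_cases h1 : P w <;> by_cases h2 : w ≤ b <;> simp [h1, h2, mul_comm]
      _ = _ := by simp_rw [aux_sumA]; simp
  have hx : J x = 0 := by
    have := key (fun _ => True)
    simp only [true_and, if_true] at this
    rw [← this]
    simp_rw [← hJ]
    exact h0
  have := key (fun w => w ≤ a)
  simp_rw [← le_inf_iff, ← hJ] at this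
  rw [this, hx]; simp

lemma aux_vanish {L : Type*} [SemilatticeInf L] [Fintype L] [DecidableEq L]
    [LocallyFiniteOrder L] (x y : L) (hy : ∀ z, z < x → ∃ u, z ≤ u ∧ y ≤ u ∧ u < x) (hyx : y ≤ x) :
    ∀ z, ¬ y ≤ z → mu ℤ z x = 0 := by
  classical
  intro z
  induction z using (wellFounded_gt (α := L)).induction with
  | _ z ih =>
  intro hz
  by_cases hzx : z ≤ x
  swap
  · exact apply_eq_zero_of_not_le hzx _
  have hne : z ≠ x := fun h => hz (h ▸ hyx)
  obtain ⟨u, hzu, hyu, hux⟩ := hy z (lt_of_le_of_ne hzx hne)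
  rw [mu_eq_neg_sum_Ioc_of_ne hne, neg_eq_zero]
  let T : Finset L := Finset.univ.filter fun w => z ≤ w ∧ y ≤ w
  have hT : T.Nonempty := ⟨u, by simp [T, hzu, hyu]⟩
  let s := T.inf' hT id
  have hzs : z ≤ s := Finset.le_inf' _ _ fun w hw => by simp [T] at hw; exact hw.1
  have hys : y ≤ s := Finset.le_inf' _ _ fun w hw => by simp [T] at hw; exact hw.2
  have hsle : ∀ w, z ≤ w → y ≤ w → s ≤ w := fun w h1 h2 =>
    Finset.inf'_le id (by simp [T, h1, h2])
  have hsx : s ≠ x := ((hsle u hzu hyu).trans_lt hux).ne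
  have h := sum_Icc_mu_left (𝕜 := ℤ) s x
  rw [if_neg hsx] at h
  rw [← h]
  symm
  apply Finset.sum_subset
  · intro w hw
    simp at hw ⊢
    refine ⟨lt_of_le_of_ne (hzs.trans hw.1) ?_, hw.2⟩
    rintro rfl
    exact hz (hys.trans hw.1)
  · intro w hw hw'
    simp at hw hw'
    apply ih w hw.1
    intro hyw
    exact hw' (hsle w hw.1.le hyw) hw.2

/-- the number attached to an element -/
noncomputable def auxF {L : Type*} [SemilatticeInf L] [Fintype L] (q : L → ℕ) (z : L) : ℕ :=
  by classical exact ∏ w, if w ≤ z then q w else 1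

lemma auxF_pos {L : Type*} [SemilatticeInf L] [Fintype L] (q : L → ℕ) (hq : ∀ w, 1 < q w) (z : L) :
    0 < auxF q z := by
  classical
  unfold auxF
  apply Finset.prod_pos
  intro w _
  have := hq w
  split_ifs <;> omega

lemma aux_dvd {L : Type*} [SemilatticeInf L] [Fintype L] (q : L → ℕ) (w z : L) (h : w ≤ z) :
    q w ∣ auxF q z := by
  classical
  unfold auxF
  have := Finset.dvd_prod_of_mem (fun w => if w ≤ z then q w else 1) (Finset.mem_univ w)
  simpa [h] using this

lemma auxF_dvd_iff {L : Type*} [SemilatticeInf L] [Fintype L] (q : L → ℕ) (hq : ∀ w, 1 < q w)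
    (hc : ∀ v w, v ≠ w → Nat.Coprime (q v) (q w)) (a b : L) : a ≤ b ↔ auxF q a ∣ auxF q b := by
  classical
  constructor
  · intro h
    unfold auxF
    apply Finset.prod_dvd_prod_of_dvd
    intro w _
    by_cases hw : w ≤ a
    · simp [hw, hw.trans h]
    · simp [hw]
  · intro h
    by_contra hab
    have h1 : q a ∣ auxF q b := (aux_dvd q a a le_rfl).trans h
    have h2 : Nat.Coprime (q a) (auxF q b) := by
      unfold auxF
      apply Nat.Coprime.prod_right
      intro w _
      split_ifs with hw
      · apply hc
        rintro rfl
        exact hab hw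
      · simp
    have := Nat.Coprime.eq_one_of_dvd h2 h1
    have := hq a
    omega

lemma auxF_gcd {L : Type*} [SemilatticeInf L] [Fintype L] (q : L → ℕ)
    (hc : ∀ v w, v ≠ w → Nat.Coprime (q v) (q w)) (a b : L) :
    Nat.gcd (auxF q a) (auxF q b) = auxF q (a ⊓ b) := by
  classical
  have fac : ∀ a b : L, auxF q a = auxF q (a ⊓ b) * ∏ w, if w ≤ a ∧ ¬ w ≤ b then q w else 1 := by
    intro a b
    unfold auxF
    rw [← Finset.prod_mul_distrib]
    refine Finset.prod_congr rfl fun w _ => ?_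
    by_cases h1 : w ≤ a <;> by_cases h2 : w ≤ b <;> simp [h1, h2]
  have h2 := fac b a
  rw [inf_comm] at h2
  rw [fac a b, h2, Nat.gcd_mul_left]
  have : Nat.Coprime (∏ w, if w ≤ a ∧ ¬ w ≤ b then q w else 1)
      (∏ w, if w ≤ b ∧ ¬ w ≤ a then q w else 1) := by
    apply Nat.Coprime.prod_left
    intro v _
    apply Nat.Coprime.prod_right
    intro w _
    split_ifs with h1 h2
    · apply hc
      rintro rfl
      exact h1.2 h2.1
    all_goals simp
  rw [Nat.Coprime.gcd_eq_one this, mul_one]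

/-- the pairwise coprime labels -/
noncomputable def auxQ {L : Type*} [Fintype L] (x : L) (N : ℕ) (w : L) : ℕ :=
  by classical exact (Nat.nth Nat.Prime (Fintype.equivFin L w)) ^ (if w = x then N + 1 else 1)

lemma auxQ_gt {L : Type*} [Fintype L] (x : L) (N : ℕ) (w : L) : 1 < auxQ x N w := by
  unfold auxQ
  apply Nat.one_lt_pow
  · split_ifs <;> omega
  · exact (Nat.prime_nth_prime _).one_lt

lemma auxQ_coprime {L : Type*} [Fintype L] (x : L) (N : ℕ) (v w : L) (h : v ≠ w) :
    Nat.Coprime (auxQ x N v) (auxQ x N w) := by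
  unfold auxQ
  apply Nat.Coprime.pow
  rw [Nat.coprime_primes (Nat.prime_nth_prime _) (Nat.prime_nth_prime _)]
  intro h'
  have := Nat.nth_injective Nat.infinite_setOf_prime h'
  exact h ((Fintype.equivFin L).injective (Fin.ext this))

lemma auxQ_big {L : Type*} [Fintype L] (x : L) (N : ℕ) : 2 ^ N ≤ auxQ x N x := by
  unfold auxQ
  simp only [if_true]
  calc 2 ^ N ≤ 2 ^ (N+1) := Nat.pow_le_pow_right (by norm_num) (by omega)
    _ ≤ _ := Nat.pow_le_pow_left (Nat.prime_nth_prime _).two_le _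

lemma auxF_indep {L : Type*} [SemilatticeInf L] [Fintype L] (x z : L) (N : ℕ) (h : ¬ x ≤ z) :
    auxF (auxQ x N) z = auxF (auxQ x 0) z := by
  classical
  unfold auxF
  refine Finset.prod_congr rfl fun w _ => ?_
  split_ifs with hw
  · unfold auxQ
    have : w ≠ x := by rintro rfl; exact h hw
    simp [this]
  · rfl

lemma aux_det {L : Type*} [SemilatticeInf L] [Fintype L] [DecidableEq L]
    [LocallyFiniteOrder L] (x : L) (f : L → ℕ) (α : ℝ) (hf : ∀ a, 0 < f a)
    (hg : ∀ a b, Nat.gcd (f a) (f b) = f (a ⊓ b))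
    (h0 : ∑ b, ((mu ℤ b x : ℤ) : ℝ) * (f b : ℝ) ^ (-α) = 0) :
    (Matrix.of fun a b => (Nat.lcm (f a) (f b) : ℝ) ^ α).det = 0 := by
  rw [← Matrix.exists_mulVec_eq_zero_iff]
  refine ⟨fun b => ((mu ℤ b x : ℤ) : ℝ) * (f b : ℝ) ^ (-α), ?_, ?_⟩
  · intro h
    have := congrFun h x
    simp only [mu_self, Pi.zero_apply, Int.cast_one, one_mul] at this
    have h2 : (0:ℝ) < (f x : ℝ) ^ (-α) := Real.rpow_pos_of_pos (by exact_mod_cast hf x) _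
    exact h2.ne' this
  · ext a
    simp only [Matrix.mulVec, dotProduct, Matrix.of_apply, Pi.zero_apply]
    have := aux_ker x (fun b => (f b : ℝ) ^ (-α)) h0 a
    calc _ = ∑ b, (f a : ℝ) ^ α * (((mu ℤ b x : ℤ) : ℝ) * (f (a ⊓ b) : ℝ) ^ (-α)) := by
          refine Finset.sum_congr rfl fun b _ => ?_
          have ha : (0:ℝ) < f a := by exact_mod_cast hf a
          have hb : (0:ℝ) < f b := by exact_mod_cast hf b
          have hab : (0:ℝ) < f (a ⊓ b) := by exact_mod_cast hf (a ⊓ b)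
          have hl : (Nat.lcm (f a) (f b) : ℝ) = f a * f b * (f (a ⊓ b) : ℝ)⁻¹ := by
            rw [eq_mul_inv_iff_mul_eq₀ hab.ne', ← hg]
            have := Nat.gcd_mul_lcm (f a) (f b)
            rw [mul_comm]
            exact_mod_cast this
          rw [hl, Real.mul_rpow (by positivity) (by positivity),
            Real.mul_rpow (by positivity) (by positivity), Real.inv_rpow hab.le,
            Real.rpow_neg hb.le, Real.rpow_neg hab.le]
          have : (f b : ℝ) ^ α ≠ 0 := (Real.rpow_pos_of_pos hb _).ne'
          field_simp
      _ = 0 := by rw [← Finset.mul_sum, this, mul_zero]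

open Filter Topology in
lemma aux_main {L : Type*} [SemilatticeInf L] [Fintype L] [DecidableEq L]
    [LocallyFiniteOrder L] (x y : L) (hy : ∀ z, z < x → ∃ u, z ≤ u ∧ y ≤ u ∧ u < x)
    (hyx : y < x) (hmu : 0 < mu ℤ y x) :
    ∃ (f : L → ℕ) (α₀ : ℝ),
      (∀ a, 0 < f a) ∧ Function.Injective f ∧
      (∀ a b, a ≤ b ↔ f a ∣ f b) ∧
      (∀ a b, ∃ c, f c = Nat.gcd (f a) (f b)) ∧
      0 < α₀ ∧
      (Matrix.of fun a b => (Nat.lcm (f a) (f b) : ℝ) ^ α₀).det = 0 := by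
  classical
  have van := aux_vanish x y hy hyx.le
  set c : L → ℝ := fun b => ((mu ℤ b x : ℤ) : ℝ) with hcdef
  have hcx : c x = 1 := by simp [hcdef]
  have hc0 : ∀ b, ¬ (y ≤ b ∧ b ≤ x) → c b = 0 := by
    intro b hb
    simp only [hcdef, Int.cast_eq_zero]
    by_cases h : y ≤ b
    · exact apply_eq_zero_of_not_le (fun h' => hb ⟨h, h'⟩) _
    · exact van b h
  have hsum : ∑ b, c b = 0 := by
    have h := aux_sumA x y
    rw [if_neg hyx.ne] at h
    rw [← h]
    refine Finset.sum_congr rfl fun b _ => ?_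
    split_ifs with hb
    · rfl
    · exact hc0 b (fun h => hb h.1)
  have Fpos : ∀ N a, (0:ℝ) < auxF (auxQ x N) a := fun N a => by
    exact_mod_cast auxF_pos _ (auxQ_gt x N) a
  -- the small exponent
  have hsmall : ∃ α : ℝ, 0 < α ∧
      ∑ b ∈ Finset.univ.erase x, c b * (auxF (auxQ x 0) b : ℝ) ^ (-α) < -1/2 := by
    have hcont : Continuous fun α : ℝ =>
        ∑ b ∈ Finset.univ.erase x, c b * (auxF (auxQ x 0) b : ℝ) ^ (-α) := by
      refine continuous_finset_sum _ fun b _ => ?_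
      exact continuous_const.mul (Real.continuous_const_rpow (Fpos 0 b).ne' |>.comp continuous_neg)
    have h0 : ∑ b ∈ Finset.univ.erase x, c b * (auxF (auxQ x 0) b : ℝ) ^ (-(0:ℝ)) < -1/2 := by
      simp only [neg_zero, Real.rpow_zero, mul_one]
      have := Finset.add_sum_erase Finset.univ c (Finset.mem_univ x)
      rw [hsum, hcx] at this
      linarith
    have hev : ∀ᶠ α in 𝓝[>] (0:ℝ),
        ∑ b ∈ Finset.univ.erase x, c b * (auxF (auxQ x 0) b : ℝ) ^ (-α) < -1/2 :=
      (hcont.continuousAt.eventually_lt continuousAt_const h0).filter_mono nhdsWithin_le_nhds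
    obtain ⟨α, h1, h2⟩ := (hev.and self_mem_nhdsWithin).exists
    exact ⟨α, h2, h1⟩
  obtain ⟨α₁, hα₁, hneg⟩ := hsmall
  have hN : ∃ N : ℕ, ((2:ℝ) ^ (-α₁)) ^ N < 1/2 := by
    apply exists_pow_lt_of_lt_one (by norm_num)
    exact Real.rpow_lt_one_of_one_lt_of_neg (by norm_num) (by linarith)
  obtain ⟨N, hN⟩ := hN
  set f : L → ℕ := auxF (auxQ x N) with hf
  have fpos : ∀ a, (0:ℝ) < f a := Fpos N
  have hdvd := auxF_dvd_iff (auxQ x N) (auxQ_gt x N) (auxQ_coprime x N)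
  have hgcd := auxF_gcd (auxQ x N) (auxQ_coprime x N)
  have finj : Function.Injective f := by
    intro a b hab
    apply le_antisymm
    · rw [hdvd]; exact hab.dvd
    · rw [hdvd]; exact hab.symm.dvd
  let h : ℝ → ℝ := fun α => ∑ b, c b * (f b : ℝ) ^ (-α)
  have hcont : Continuous h := by
    refine continuous_finset_sum _ fun b _ => ?_
    exact continuous_const.mul (Real.continuous_const_rpow (fpos b).ne' |>.comp continuous_neg)
  have h1 : h α₁ < 0 := by
    have e1 : h α₁ = c x * (f x : ℝ) ^ (-α₁) + ∑ b ∈ Finset.univ.erase x, c b * (f b : ℝ) ^ (-α₁) :=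
      (Finset.add_sum_erase Finset.univ _ (Finset.mem_univ x)).symm
    have e2 : ∑ b ∈ Finset.univ.erase x, c b * (f b : ℝ) ^ (-α₁) =
        ∑ b ∈ Finset.univ.erase x, c b * (auxF (auxQ x 0) b : ℝ) ^ (-α₁) := by
      refine Finset.sum_congr rfl fun b hb => ?_
      by_cases hb2 : x ≤ b
      · have hbx : b ≠ x := Finset.ne_of_mem_erase hb
        rw [hc0 b (fun h => hbx (le_antisymm h.2 hb2))]; simp
      · rw [hf, auxF_indep x b N hb2]
    have e3 : (f x : ℝ) ^ (-α₁) < 1/2 := by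
      refine lt_of_le_of_lt ?_ hN
      rw [← Real.rpow_natCast, ← Real.rpow_mul (by norm_num), mul_comm,
        Real.rpow_mul (by norm_num), Real.rpow_natCast]
      apply Real.rpow_le_rpow_of_nonpos (by positivity) _ (by linarith)
      have : 2 ^ N ≤ f x := (auxQ_big x N).trans
        (Nat.le_of_dvd (auxF_pos _ (auxQ_gt x N) x) (aux_dvd _ x x le_rfl))
      exact_mod_cast this
    rw [e1, e2, hcx]
    linarith
  have h2 : ∃ α₂, α₁ ≤ α₂ ∧ 0 < h α₂ := by
    have ht : Tendsto (fun α : ℝ => ∑ b, c b * ((f y : ℝ) / f b) ^ α) atTop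
        (𝓝 (∑ b, if b = y then c y else 0)) := by
      refine tendsto_finset_sum _ fun b _ => ?_
      split_ifs with hb
      · subst hb
        simp [div_self (fpos b).ne']
      · by_cases hyb : y ≤ b
        · have hlt : (f y : ℝ) < f b := by
            have : f y < f b := lt_of_le_of_ne
              (Nat.le_of_dvd (auxF_pos _ (auxQ_gt x N) b) ((hdvd y b).1 hyb))
              (fun h => hb (finj h).symm)
            exact_mod_cast this
          have := tendsto_rpow_atTop_of_base_lt_one ((f y : ℝ) / f b)
            (by have := div_pos (fpos y) (fpos b); linarith) ((div_lt_one (fpos b)).2 hlt)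
          simpa using this.const_mul (c b)
        · rw [hc0 b (fun h => hyb h.1)]
          simp
    have hpos : (0:ℝ) < ∑ b, if b = y then c y else 0 := by
      simp [hcdef]; exact hmu
    obtain ⟨α₂, hA, hB⟩ := ((ht.eventually_const_lt hpos).and (eventually_ge_atTop α₁)).exists
    refine ⟨α₂, hB, ?_⟩
    have : ∑ b, c b * ((f y : ℝ) / f b) ^ α₂ = (f y : ℝ) ^ α₂ * h α₂ := by
      simp only [h]
      rw [Finset.mul_sum]
      refine Finset.sum_congr rfl fun b _ => ?_
      rw [Real.div_rpow (fpos y).le (fpos b).le, Real.rpow_neg (fpos b).le]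
      ring
    rw [this] at hA
    exact pos_of_mul_pos_right hA (Real.rpow_pos_of_pos (fpos y) _).le
  obtain ⟨α₂, h12, h2⟩ := h2
  obtain ⟨α₀, hm, h0⟩ := intermediate_value_Icc h12 hcont.continuousOn ⟨h1.le, h2.le⟩
  refine ⟨f, α₀, auxF_pos _ (auxQ_gt x N), finj, hdvd, fun a b => ⟨a ⊓ b, (hgcd a b).symm⟩,
    hα₁.trans_le hm.1, ?_⟩
  exact aux_det x f α₀ (auxF_pos _ (auxQ_gt x N)) hgcd h0

/-- Let `L` be a finite meet semilattice with `x ∈ L` and `y 0, …, y (m-1)` (`m ≥ 2`)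
exactly the elements covered by `x`, such that `μ_L (y 0 ⊓ ⋯ ⊓ y (m-1), x) > 0`.  Then
there is a GCD closed set of positive integers, order-isomorphic to `L` under
divisibility, and a real `α₀ > 0` such that its power LCM matrix
`[lcm (f a) (f b) ^ α₀]` is singular. -/
theorem stmt_12 {L : Type*} [SemilatticeInf L] [Fintype L] [DecidableEq L]
    [LocallyFiniteOrder L] (x : L) (m : ℕ) (hm : 2 ≤ m) (y : Fin m → L)
    (hyinj : Function.Injective y) (hcov : ∀ w, w ⋖ x ↔ ∃ i, y i = w)
    (hmu : 0 < mu ℤ (Finset.univ.inf'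
      (@Finset.univ_nonempty (Fin m) _ (Fin.pos_iff_nonempty.mp (by omega))) y) x) :
    ∃ (f : L → ℕ) (α₀ : ℝ),
      (∀ a, 0 < f a) ∧ Function.Injective f ∧
      (∀ a b, a ≤ b ↔ f a ∣ f b) ∧
      (∀ a b, ∃ c, f c = Nat.gcd (f a) (f b)) ∧
      0 < α₀ ∧
      (Matrix.of fun a b => (Nat.lcm (f a) (f b) : ℝ) ^ α₀).det = 0 := by
  have hyi : ∀ i, Finset.univ.inf'
      (@Finset.univ_nonempty (Fin m) _ (Fin.pos_iff_nonempty.mp (by omega))) y ≤ y i :=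
    fun i => Finset.inf'_le _ (Finset.mem_univ i)
  have hyx : ∀ i, y i < x := fun i => ((hcov (y i)).2 ⟨i, rfl⟩).lt
  refine aux_main x _ ?_ ((hyi ⟨0, by omega⟩).trans_lt (hyx _)) hmu
  intro z hz
  obtain ⟨u, hzu, hu⟩ := exists_le_covBy_of_lt hz
  obtain ⟨i, rfl⟩ := (hcov u).1 hu
  exact ⟨y i, hzu, hyi i, hyx i⟩
end

section
/- Let (L, ⪯) be a finite meet semilattice with n elements. The following are equivalent: (1) for every real α > 0 and every GCD closed set S = {x_1, …, x_n} of positive integers with (S, |) order-isomorphic to (L, ⪯), the power LCM matrix with ij-entry lcm(x_i, x_j)^α is nonsingular; (2) every element of L covers at most one element of L; (3) for all z_i, z_j ∈ L, μ_L(z_i, z_j) > 0 implies z_i = z_j. -/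
open IncidenceAlgebra

section aux
open Finset Classical

variable {L : Type*} [SemilatticeInf L] [Fintype L]

theorem aux_cover (t p : L) (ht : ∀ y₁ y₂ : L, y₁ ⋖ t → y₂ ⋖ t → y₁ = y₂) (hp : p ⋖ t)
    {R : Type*} [CommRing R] (H : L → R) :
    H t = (∑ s with s ≤ t, H s) - ∑ s with s ≤ p, H s := by
  have : (univ.filter (fun s : L => s ≤ t)) = insert t (univ.filter (fun s : L => s ≤ p)) := by
    ext s
    simp only [mem_filter, mem_univ, true_and, mem_insert]
    constructor
    · intro h
      rcases h.eq_or_lt with h | h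
      · exact Or.inl h
      · obtain ⟨c, hc, hc'⟩ := exists_le_covBy_of_lt h
        rw [ht c p hc' hp] at hc
        exact Or.inr hc
    · rintro (h | h)
      · exact h.le
      · exact h.trans hp.le
  rw [this, sum_insert]
  · ring
  · simp [hp.lt.not_ge]

theorem aux_min (t : L) (ht : ∀ p, ¬ p ⋖ t) {R : Type*} [CommRing R] (H : L → R) :
    H t = ∑ s with s ≤ t, H s := by
  have : (univ.filter (fun s : L => s ≤ t)) = {t} := by
    ext s
    simp only [mem_filter, mem_univ, true_and, mem_singleton]
    constructor
    · intro h
      rcases h.eq_or_lt with h | h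
      · exact h
      · obtain ⟨c, hc, hc'⟩ := exists_le_covBy_of_lt h
        exact absurd hc' (ht c)
    · rintro h
      exact h.le
  rw [this, sum_singleton]

theorem aux_branch (x y₁ y₂ : L) (h1 : y₁ ⋖ x) (h2 : y₂ ⋖ x)
    {R : Type*} [CommRing R] [LinearOrder R] [IsStrictOrderedRing R] (H : L → R)
    (hH : ∀ t, t < x → ¬ t ≤ y₁ → H t ≤ 0) :
    (∑ s with s ≤ x, H s) - (∑ s with s ≤ y₁, H s) - (∑ s with s ≤ y₂, H s)
      + (∑ s with s ≤ y₁ ⊓ y₂, H s) ≤ H x := by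
  have e1 : (∑ s with s ≤ x, H s) = H x + ∑ s with s < x, H s := by
    rw [← sum_insert (by simp)]
    congr 1
    ext s
    simp [le_iff_eq_or_lt]
  have e2 : (∑ s with s < x, H s) = (∑ s with s ≤ y₁ ∨ s ≤ y₂, H s)
      + ∑ s with s < x ∧ ¬ (s ≤ y₁ ∨ s ≤ y₂), H s := by
    rw [← sum_filter_add_sum_filter_not (univ.filter (fun s : L => s < x))
      (fun s => s ≤ y₁ ∨ s ≤ y₂), filter_filter, filter_filter]
    congr 2
    ext s
    simp only [mem_filter, mem_univ, true_and, and_iff_right_iff_imp]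
    rintro (h | h)
    · exact h.trans_lt h1.lt
    · exact h.trans_lt h2.lt
  have e3 : (∑ s with s ≤ y₁ ∨ s ≤ y₂, H s) + (∑ s with s ≤ y₁ ⊓ y₂, H s)
      = (∑ s with s ≤ y₁, H s) + (∑ s with s ≤ y₂, H s) := by
    simp only [le_inf_iff]
    rw [filter_or, filter_and]
    exact sum_union_inter
  have e4 : ∑ s with s < x ∧ ¬ (s ≤ y₁ ∨ s ≤ y₂), H s ≤ 0 := by
    apply sum_nonpos
    intro s hs
    simp only [mem_filter, mem_univ, true_and, not_or] at hs
    exact hH s hs.1 hs.2.1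
  linarith

theorem aux_minimal (h : ¬ ∀ x y₁ y₂ : L, y₁ ⋖ x → y₂ ⋖ x → y₁ = y₂) :
    ∃ x y₁ y₂ : L, y₁ ⋖ x ∧ y₂ ⋖ x ∧ y₁ ≠ y₂ ∧
      ∀ t, t < x → ∀ z₁ z₂ : L, z₁ ⋖ t → z₂ ⋖ t → z₁ = z₂ := by
  push Not at h
  let P : L → Prop := fun x => ∃ y₁ y₂, y₁ ⋖ x ∧ y₂ ⋖ x ∧ y₁ ≠ y₂
  have wf : WellFounded ((· < ·) : L → L → Prop) := wellFounded_lt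
  have hP : {x | P x}.Nonempty := h
  obtain ⟨y₁, y₂, a, b, c⟩ := wf.min_mem _ hP
  refine ⟨_, y₁, y₂, a, b, c, ?_⟩
  intro t ht z₁ z₂ h1 h2
  by_contra hne
  exact wf.not_lt_min (s := {x | P x}) (x := t) ⟨z₁, z₂, h1, h2, hne⟩ ht

theorem aux_ne (x y₁ y₂ : L) (h1 : y₁ ⋖ x) (h2 : y₂ ⋖ x) (h : y₁ ≠ y₂) : y₁ ⊓ y₂ < y₁ := by
  apply lt_of_le_of_ne inf_le_left
  intro he
  have : y₁ ≤ y₂ := inf_eq_left.1 he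
  exact h1.2 (lt_of_le_of_ne this h) h2.lt

end aux

section aux2
open Finset Classical

variable {L : Type*} [SemilatticeInf L] [Fintype L] [DecidableEq L] [LocallyFiniteOrder L]

theorem aux_mu_sum (R : Type*) [CommRing R] (z c : L) :
    ∑ t with t ≤ c, mu R z t = if z = c then 1 else 0 := by
  rw [← sum_Icc_mu_right z c]
  symm
  apply sum_subset
  · intro s; simp only [mem_Icc, mem_filter, mem_univ, true_and]; exact fun h => h.2
  · intro s hs hs'
    simp only [mem_Icc, mem_filter, mem_univ, true_and] at hs hs'
    exact apply_eq_zero_of_not_le (fun h => hs' ⟨h, hs⟩) _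

theorem aux_mu_nonpos (z t : L) (hz : z ≠ t)
    (ht : ∀ y₁ y₂ : L, y₁ ⋖ t → y₂ ⋖ t → y₁ = y₂) : mu ℤ z t ≤ 0 := by
  by_cases h : ∃ p, p ⋖ t
  · obtain ⟨p, hp⟩ := h
    rw [aux_cover t p ht hp (fun s => mu ℤ z s), aux_mu_sum, aux_mu_sum, if_neg hz]
    split_ifs <;> simp
  · push Not at h
    rw [aux_min t h (fun s => mu ℤ z s), aux_mu_sum, if_neg hz]

theorem aux_32 (h : ∀ zi zj : L, 0 < mu ℤ zi zj → zi = zj) :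
    ∀ x y₁ y₂ : L, y₁ ⋖ x → y₂ ⋖ x → y₁ = y₂ := by
  by_contra hc
  obtain ⟨x, y₁, y₂, h1, h2, hne, hmin⟩ := aux_minimal hc
  have l1 := aux_ne x y₁ y₂ h1 h2 hne
  have l2 : y₁ ⊓ y₂ < y₂ := by rw [inf_comm]; exact aux_ne x y₂ y₁ h2 h1 hne.symm
  have := aux_branch x y₁ y₂ h1 h2 (fun s => mu ℤ (y₁ ⊓ y₂) s) (by
    intro t ht hty
    apply aux_mu_nonpos _ _ _ (hmin t ht)
    rintro rfl
    exact hty inf_le_left)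
  rw [aux_mu_sum, aux_mu_sum, aux_mu_sum, aux_mu_sum, if_neg l1.ne, if_neg l2.ne, if_pos rfl,
    if_neg (l1.trans h1.lt).ne] at this
  exact (l1.trans h1.lt).ne (h _ x (by linarith))

/-- Moebius transform -/
noncomputable def hh (g : L → ℝ) (t : L) : ℝ := ∑ c, mu ℝ c t * g c

theorem hh_sum (g : L → ℝ) (c : L) : ∑ t with t ≤ c, hh g t = g c := by
  unfold hh
  rw [sum_comm]
  simp_rw [← sum_mul, aux_mu_sum]
  simp

theorem hh_split (g : L → ℝ) (x : L) : hh g x = g x + ∑ c with c < x, mu ℝ c x * g c := by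
  unfold hh
  have : g x = mu ℝ x x * g x := by simp
  rw [this, ← sum_insert (s := univ.filter (fun c : L => c < x))
    (f := fun c => mu ℝ c x * g c) (by simp)]
  symm
  apply sum_subset (subset_univ _)
  intro c _ hc
  simp only [mem_insert, mem_filter, mem_univ, true_and, ← le_iff_eq_or_lt] at hc
  rw [apply_eq_zero_of_not_le hc, zero_mul]

theorem mu_lt_sum (x y : L) (hy : y < x) : ∑ c with c < x, mu ℝ c x = -1 := by
  obtain ⟨b, hb⟩ : ∃ b : L, ∀ a, b ≤ a :=
    ⟨univ.inf' ⟨x, mem_univ _⟩ id, fun a => inf'_le id (mem_univ a)⟩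
  have h := sum_Icc_mu_left (𝕜 := ℝ) b x
  rw [if_neg ((hb y).trans_lt hy).ne] at h
  have : Icc b x = insert x (univ.filter (fun c : L => c < x)) := by
    ext s; simp [hb, le_iff_eq_or_lt]
  rw [this, sum_insert (by simp), mu_self] at h
  linarith

theorem aux_det_s13 (g F : L → ℝ) (hF : ∀ a, F a ≠ 0) :
    (Matrix.of fun a b : L => F a * F b * g (a ⊓ b)).det ≠ 0 ↔ ∀ t, hh g t ≠ 0 := by
  let Z : Matrix L L ℝ := Matrix.of fun a t => if t ≤ a then 1 else 0
  let N : Matrix L L ℝ := Matrix.of fun t b => mu ℝ b t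
  have hZ : Z * N = 1 := by
    ext a b
    simp only [Z, N, Matrix.mul_apply, Matrix.of_apply, ite_mul, one_mul, zero_mul]
    rw [← sum_filter, aux_mu_sum, Matrix.one_apply]
    simp [eq_comm]
  have hdZ : Z.det ≠ 0 := by
    intro h0
    have := congrArg Matrix.det hZ
    rw [Matrix.det_mul, h0] at this
    simp at this
  have hA : (Matrix.of fun a b : L => F a * F b * g (a ⊓ b)) =
      Matrix.diagonal F * (Z * Matrix.diagonal (hh g) * Z.transpose) * Matrix.diagonal F := by
    ext a b
    rw [Matrix.mul_diagonal, Matrix.diagonal_mul, Matrix.mul_apply]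
    simp only [Matrix.mul_diagonal, Z, Matrix.transpose_apply, Matrix.of_apply]
    rw [← hh_sum g (a ⊓ b), sum_filter]
    have : ∀ t, (if t ≤ a ⊓ b then hh g t else 0) =
      (if t ≤ a then (1:ℝ) else 0) * hh g t * (if t ≤ b then 1 else 0) := by
      intro t
      by_cases h1 : t ≤ a <;> by_cases h2 : t ≤ b <;> simp [h1, h2]
    simp_rw [this]
    ring
  rw [hA]
  simp only [Matrix.det_mul, Matrix.det_diagonal, Matrix.det_transpose]
  have hp : ∏ a, F a ≠ 0 := prod_ne_zero_iff.2 fun a _ => hF a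
  simp [hp, hdZ, prod_eq_zero_iff]

theorem aux_mat (α : ℝ) (f : L → ℕ) (hpos : ∀ a, 0 < f a)
    (hle : ∀ a b, a ≤ b ↔ f a ∣ f b) (hg : ∀ a b, ∃ c, f c = Nat.gcd (f a) (f b)) :
    (Matrix.of fun a b : L => (Nat.lcm (f a) (f b) : ℝ) ^ α).det ≠ 0 ↔
      ∀ t, hh (fun c => (f c : ℝ) ^ (-α)) t ≠ 0 := by
  rw [← aux_det_s13 _ (fun a => (f a : ℝ) ^ α)]
  · have : (Matrix.of fun a b : L => (Nat.lcm (f a) (f b) : ℝ) ^ α) =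
      Matrix.of fun a b : L => (f a : ℝ) ^ α * (f b : ℝ) ^ α * (f (a ⊓ b) : ℝ) ^ (-α) := by
      ext a b
      simp only [Matrix.of_apply]
      have hgcd : f (a ⊓ b) = Nat.gcd (f a) (f b) := by
        obtain ⟨c, hc⟩ := hg a b
        rw [← hc]
        have h1 : c ≤ a ⊓ b := le_inf ((hle _ _).2 (hc ▸ Nat.gcd_dvd_left _ _))
          ((hle _ _).2 (hc ▸ Nat.gcd_dvd_right _ _))
        apply Nat.dvd_antisymm
        · rw [hc]
          exact Nat.dvd_gcd ((hle _ _).1 inf_le_left) ((hle _ _).1 inf_le_right)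
        · exact (hle _ _).1 h1
      have hm : (f (a ⊓ b) : ℝ) * (Nat.lcm (f a) (f b) : ℝ) = f a * f b := by
        rw [hgcd]; exact_mod_cast Nat.gcd_mul_lcm _ _
      have hfp : (0:ℝ) < f (a ⊓ b) := by exact_mod_cast hpos _
      rw [← Real.mul_rpow (by positivity) (by positivity), ← hm,
        Real.mul_rpow (by positivity) (by positivity), Real.rpow_neg hfp.le]
      field_simp
    rw [this]
  · intro a
    have hfp : (0:ℝ) < f a := by exact_mod_cast hpos _
    positivity

theorem aux_21 (h : ∀ x y₁ y₂ : L, y₁ ⋖ x → y₂ ⋖ x → y₁ = y₂) (α : ℝ) (hα : 0 < α)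
    (f : L → ℕ) (hpos : ∀ a, 0 < f a) (hinj : Function.Injective f)
    (hle : ∀ a b, a ≤ b ↔ f a ∣ f b) (hg : ∀ a b, ∃ c, f c = Nat.gcd (f a) (f b)) :
    (Matrix.of fun a b : L => (Nat.lcm (f a) (f b) : ℝ) ^ α).det ≠ 0 := by
  rw [aux_mat α f hpos hle hg]
  intro t
  by_cases hp : ∃ p, p ⋖ t
  · obtain ⟨p, hp⟩ := hp
    rw [aux_cover t p (h t) hp (hh _), hh_sum, hh_sum]
    intro h0
    have h1 : (f t : ℝ) = f p :=
      (Real.rpow_left_inj (by positivity) (by positivity) (by linarith : -α ≠ 0)).1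
        (sub_eq_zero.1 h0)
    exact hp.lt.ne (hinj (by exact_mod_cast h1.symm))
  · push Not at hp
    rw [aux_min t hp (hh _), hh_sum]
    have : (0:ℝ) < f t := by exact_mod_cast hpos _
    positivity

/-- product of primes below -/
noncomputable def pf (p : L → ℕ) (a : L) : ℕ := ∏ v with v ≤ a, p v

theorem pf_pos (p : L → ℕ) (hp : ∀ a, (p a).Prime) (a : L) : 0 < pf p a :=
  prod_pos fun v _ => (hp v).pos

theorem pf_le (p : L → ℕ) (hp : ∀ a, (p a).Prime) (hi : Function.Injective p) (a b : L) :
    a ≤ b ↔ pf p a ∣ pf p b := by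
  constructor
  · intro h
    apply prod_dvd_prod_of_subset
    intro s
    simp only [mem_filter, mem_univ, true_and]
    exact fun hs => hs.trans h
  · intro h
    have h1 : p a ∣ pf p a := dvd_prod_of_mem p (by simp)
    have h2 := h1.trans h
    obtain ⟨v, hv, hd⟩ := ((hp a).prime.dvd_finset_prod_iff p).1 h2
    have := hi ((Nat.prime_dvd_prime_iff_eq (hp a) (hp v)).1 hd)
    simp only [mem_filter, mem_univ, true_and] at hv
    rw [this]; exact hv

theorem pf_inj (p : L → ℕ) (hp : ∀ a, (p a).Prime) (hi : Function.Injective p) :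
    Function.Injective (pf p) := by
  intro a b h
  exact le_antisymm ((pf_le p hp hi _ _).2 h.dvd) ((pf_le p hp hi _ _).2 h.symm.dvd)

theorem pf_gcd (p : L → ℕ) (hp : ∀ a, (p a).Prime) (hi : Function.Injective p) (a b : L) :
    pf p (a ⊓ b) = Nat.gcd (pf p a) (pf p b) := by
  unfold pf
  set s := univ.filter (fun v : L => v ≤ a)
  set t := univ.filter (fun v : L => v ≤ b)
  have h1 : (univ.filter (fun v : L => v ≤ a ⊓ b)) = s ∩ t := by
    ext v; simp [s, t]
  have hs : ∏ v ∈ s, p v = (∏ v ∈ s ∩ t, p v) * ∏ v ∈ s \ t, p v := (prod_inter_mul_prod_diff s t p).symm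
  have ht : ∏ v ∈ t, p v = (∏ v ∈ s ∩ t, p v) * ∏ v ∈ t \ s, p v := by
    rw [inter_comm]; exact (prod_inter_mul_prod_diff t s p).symm
  have hc : Nat.Coprime (∏ v ∈ s \ t, p v) (∏ v ∈ t \ s, p v) := by
    apply Nat.Coprime.prod_left
    intro v hv
    apply Nat.Coprime.prod_right
    intro w hw
    apply (Nat.coprime_primes (hp v) (hp w)).2
    intro he
    have := hi he
    subst this
    simp only [mem_sdiff] at hv hw
    exact hv.2 hw.1
  rw [h1, hs, ht, Nat.gcd_mul_left, hc.gcd_eq_one, mul_one]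

theorem exists_primes : ∃ p : L → ℕ, (∀ a, (p a).Prime) ∧ Function.Injective p := by
  let e := Fintype.equivFin L
  refine ⟨fun a => Nat.nth Nat.Prime (e a), fun a => Nat.prime_nth_prime _, ?_⟩
  intro a b h
  have := Nat.nth_injective Nat.infinite_setOf_prime h
  exact e.injective (Fin.ext this)

theorem aux_12 (h : ∀ α : ℝ, 0 < α → ∀ f : L → ℕ, (∀ a, 0 < f a) → Function.Injective f →
          (∀ a b, a ≤ b ↔ f a ∣ f b) → (∀ a b, ∃ c, f c = Nat.gcd (f a) (f b)) →
          (Matrix.of fun a b => (Nat.lcm (f a) (f b) : ℝ) ^ α).det ≠ 0) :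
    ∀ x y₁ y₂ : L, y₁ ⋖ x → y₂ ⋖ x → y₁ = y₂ := by
  by_contra hc
  obtain ⟨x, y₁, y₂, h1, h2, hne, hmin⟩ := aux_minimal hc
  have l1 := aux_ne x y₁ y₂ h1 h2 hne
  have l2 : y₁ ⊓ y₂ < y₂ := by rw [inf_comm]; exact aux_ne x y₂ y₁ h2 h1 hne.symm
  obtain ⟨p, hp, hpi⟩ := exists_primes (L := L)
  -- choose the exponent
  let S : ℝ → ℝ := fun α => ∑ c with c < x, mu ℝ c x * (pf p c : ℝ) ^ (-α)
  have hS0 : S 0 = -1 := by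
    simp only [S, neg_zero, Real.rpow_zero, mul_one]
    exact mu_lt_sum x y₁ h1.lt
  have hcont : ∀ q : L → ℕ, (∀ a, (q a).Prime) → ∀ c, Continuous fun α : ℝ => (pf q c : ℝ) ^ (-α) := by
    intro q hq c
    have : (pf q c : ℝ) ≠ 0 := by exact_mod_cast (pf_pos q hq c).ne'
    exact (Real.continuous_const_rpow this).comp continuous_neg
  have hSc : Continuous S := by
    refine continuous_finsetSum _ fun c _ => ?_
    exact continuous_const.mul (hcont p hp c)
  obtain ⟨α₀, hα0, hα1, hSα⟩ : ∃ α₀ : ℝ, 0 < α₀ ∧ α₀ < 1 ∧ S α₀ < -1/2 := by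
    have h1 : ∀ᶠ α in nhds (0:ℝ), S α < -1/2 :=
      hSc.continuousAt.eventually_lt continuousAt_const (by rw [hS0]; norm_num)
    have h2 : ∀ᶠ α in nhdsWithin (0:ℝ) (Set.Ioi 0), S α < -1/2 := h1.filter_mono nhdsWithin_le_nhds
    have h3 : ∀ᶠ α in nhdsWithin (0:ℝ) (Set.Ioi 0), α ∈ Set.Ioo (0:ℝ) 1 :=
      Ioo_mem_nhdsGT one_pos
    obtain ⟨α, ha, hb⟩ := (h2.and h3).exists
    exact ⟨α, hb.1, hb.2, ha⟩
  -- choose the large prime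
  obtain ⟨M, hM⟩ : ∃ M : ℕ, ∀ n : ℕ, M ≤ n → (n : ℝ) ^ (-α₀) < 1/2 := by
    have := (tendsto_rpow_neg_atTop hα0).comp (tendsto_natCast_atTop_atTop (R := ℝ))
    have := this.eventually_lt_const (show (0:ℝ) < 1/2 by norm_num)
    obtain ⟨M, hM⟩ := Filter.eventually_atTop.1 this
    exact ⟨M, hM⟩
  obtain ⟨r, hr, hrp⟩ := Nat.exists_infinite_primes (M + (∑ v, p v) + 1)
  let q : L → ℕ := Function.update p x r
  have hrv : ∀ v, p v ≠ r := by
    intro v hv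
    have := single_le_sum (f := p) (fun i _ => Nat.zero_le _) (mem_univ v)
    omega
  have hq : ∀ a, (q a).Prime := by
    intro a
    by_cases ha : a = x
    · subst ha; simpa [q] using hrp
    · simpa [q, ha] using hp a
  have hqi : Function.Injective q := by
    intro a b hab
    by_cases ha : a = x <;> by_cases hb : b = x
    · rw [ha, hb]
    · subst ha; simp [q, hb] at hab; exact absurd hab.symm (hrv b)
    · subst hb; simp [q, ha] at hab; exact absurd hab (hrv a)
    · simp [q, ha, hb] at hab; exact hpi hab
  have hqp : ∀ c, c < x → pf q c = pf p c := by
    intro c hc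
    apply prod_congr rfl
    intro v hv
    simp only [mem_filter, mem_univ, true_and] at hv
    simp [q, (hv.trans_lt hc).ne]
  have hqx : M ≤ pf q x := by
    have h1 : q x ∣ pf q x := dvd_prod_of_mem q (by simp)
    have h2 := Nat.le_of_dvd (pf_pos q hq x) h1
    simp [q] at h2
    have : r ≤ pf q x := h2
    omega
  let T : ℝ → ℝ := fun α => hh (fun c => (pf q c : ℝ) ^ (-α)) x
  have hTc : Continuous T := by
    refine continuous_finsetSum _ fun c _ => ?_
    exact continuous_const.mul (hcont q hq c)
  have hT0 : T α₀ < 0 := by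
    have e : T α₀ = (pf q x : ℝ) ^ (-α₀) + S α₀ := by
      simp only [T, S]
      rw [hh_split]
      congr 1
      apply sum_congr rfl
      intro c hc
      simp only [mem_filter, mem_univ, true_and] at hc
      rw [hqp c hc]
    have := hM _ hqx
    linarith
  have hpp : ∀ c, (0:ℝ) < pf q c := fun c => by exact_mod_cast pf_pos q hq c
  have hmono : ∀ a b, a < b → 2 * (pf q a : ℝ) ≤ pf q b := by
    intro a b hab
    obtain ⟨k, hk⟩ := (pf_le q hq hqi a b).1 hab.le
    have hk2 : 2 ≤ k := by
      by_contra hlt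
      have : k = 0 ∨ k = 1 := by omega
      rcases this with rfl | rfl
      · have := pf_pos q hq b; omega
      · exact hab.ne (pf_inj q hq hqi (by omega))
    have : 2 * pf q a ≤ pf q b := by rw [hk]; nlinarith
    exact_mod_cast this
  have hT1 : 0 < T 1 := by
    have := aux_branch x y₁ y₂ h1 h2 (hh (fun c => (pf q c : ℝ) ^ (-1 : ℝ))) (by
      intro t ht hty
      by_cases hex : ∃ w, w ⋖ t
      · obtain ⟨w, hw⟩ := hex
        rw [aux_cover t w (hmin t ht) hw (hh _), hh_sum, hh_sum, Real.rpow_neg_one,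
          Real.rpow_neg_one, sub_nonpos]
        apply inv_anti₀ (hpp w)
        have := hmono w t hw.lt
        have := hpp w
        linarith
      · exfalso
        push Not at hex
        have : y₁ ⊓ t < t := lt_of_le_of_ne inf_le_right fun he => hty (inf_eq_right.1 he)
        obtain ⟨c, _, hc'⟩ := exists_le_covBy_of_lt this
        exact hex c hc')
    rw [hh_sum, hh_sum, hh_sum, hh_sum] at this
    simp only [Real.rpow_neg_one] at this
    have hx : (0:ℝ) < (pf q x : ℝ)⁻¹ := inv_pos.2 (hpp x)
    have hi : ∀ y, y₁ ⊓ y₂ < y → (pf q y : ℝ)⁻¹ ≤ (pf q (y₁ ⊓ y₂) : ℝ)⁻¹ / 2 := by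
      intro y hy
      have := inv_anti₀ (by have := hpp (y₁ ⊓ y₂); positivity) (hmono _ _ hy)
      rw [mul_inv] at this
      linarith
    have i1 := hi _ l1
    have i2 := hi _ l2
    have : T 1 = hh (fun c => (pf q c : ℝ)⁻¹) x := by simp only [T, Real.rpow_neg_one]
    linarith
  obtain ⟨α, hα, hTα⟩ := intermediate_value_Icc hα1.le hTc.continuousOn
    (show (0:ℝ) ∈ Set.Icc (T α₀) (T 1) from ⟨hT0.le, hT1.le⟩)
  have hdet := h α (hα0.trans_le hα.1) (pf q) (pf_pos q hq) (pf_inj q hq hqi) (pf_le q hq hqi)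
    (fun a b => ⟨a ⊓ b, pf_gcd q hq hqi a b⟩)
  rw [aux_mat α (pf q) (pf_pos q hq) (pf_le q hq hqi)
    (fun a b => ⟨a ⊓ b, pf_gcd q hq hqi a b⟩)] at hdet
  exact hdet x hTα

end aux2



/-- For a finite meet semilattice `L`, the following are equivalent:
(1) for every real `α > 0` and every GCD closed set of positive integers
order-isomorphic to `(L, ≤)` under divisibility, the power LCM matrix
`[lcm (f a) (f b) ^ α]` is nonsingular;
(2) every element of `L` covers at most one element of `L`;
(3) `μ_L (z i, z j) > 0` implies `z i = z j`. -/
theorem stmt_13 {L : Type*} [SemilatticeInf L] [Fintype L] [DecidableEq L]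
    [LocallyFiniteOrder L] :
    List.TFAE
      [∀ α : ℝ, 0 < α → ∀ f : L → ℕ, (∀ a, 0 < f a) → Function.Injective f →
          (∀ a b, a ≤ b ↔ f a ∣ f b) → (∀ a b, ∃ c, f c = Nat.gcd (f a) (f b)) →
          (Matrix.of fun a b => (Nat.lcm (f a) (f b) : ℝ) ^ α).det ≠ 0,
        ∀ x y₁ y₂ : L, y₁ ⋖ x → y₂ ⋖ x → y₁ = y₂,
        ∀ zi zj : L, 0 < mu ℤ zi zj → zi = zj] := by

  tfae_have 1 → 2 := aux_12
  tfae_have 2 → 1 := fun h α hα f hp hi hl hg => aux_21 h α hα f hp hi hl hg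
  tfae_have 3 → 2 := aux_32
  tfae_have 2 → 3 := by
    intro h zi zj hpos
    by_contra hne
    exact absurd (aux_mu_nonpos zi zj hne (h zj)) (not_le.2 hpos)
  tfae_finish
end

section
/- Let (L, ⪯) be a finite meet semilattice. Then every element of L covers at most one element of L if and only if for all z_i, z_j ∈ L, μ_L(z_i, z_j) > 0 implies z_i = z_j. -/
open IncidenceAlgebra

theorem aux_mu_covBy {L : Type*} [SemilatticeInf L] [DecidableEq L]
    [LocallyFiniteOrder L] {x y : L} (h : y ⋖ x) : mu ℤ y x = -1 := by
  rw [mu_eq_neg_sum_Ico_of_ne h.lt.ne]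
  have : Finset.Ico y x = {y} := by
    ext w
    simp only [Finset.mem_Ico, Finset.mem_singleton]
    constructor
    · rintro ⟨h1, h2⟩
      by_contra hne
      exact h.2 (lt_of_le_of_ne h1 (Ne.symm hne)) h2
    · rintro rfl
      exact ⟨le_rfl, h.lt⟩
  rw [this]
  simp

/-- In a finite meet semilattice `L`, every element covers at most one element if and
only if `μ_L (z i, z j) > 0` implies `z i = z j`. -/
theorem stmt_14 {L : Type*} [SemilatticeInf L] [Fintype L] [DecidableEq L]
    [LocallyFiniteOrder L] :
    (∀ x y₁ y₂ : L, y₁ ⋖ x → y₂ ⋖ x → y₁ = y₂) ↔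
      ∀ zi zj : L, 0 < mu ℤ zi zj → zi = zj := by
  constructor
  · intro H a b hpos
    by_contra hne
    have hle : a ≤ b := le_of_ne_zero hpos.ne'
    have hlt := lt_of_le_of_ne hle hne
    obtain ⟨y, hay, hy⟩ := exists_le_covBy_of_lt hlt
    have : Finset.Ico a b = Finset.Icc a y := by
      ext w
      simp only [Finset.mem_Ico, Finset.mem_Icc]
      constructor
      · rintro ⟨h1, h2⟩
        obtain ⟨y', hwy, hy'⟩ := exists_le_covBy_of_lt h2
        exact ⟨h1, (H b y' y hy' hy) ▸ hwy⟩
      · rintro ⟨h1, h2⟩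
        exact ⟨h1, h2.trans_lt hy.lt⟩
    rw [mu_eq_neg_sum_Ico_of_ne hne, this, sum_Icc_mu_right] at hpos
    split_ifs at hpos <;> omega
  · intro H x y₁ y₂ h1 h2
    by_contra hne
    have hlt1 : y₁ ⊓ y₂ < y₁ := by
      refine lt_of_le_of_ne inf_le_left fun h => ?_
      have h12 : y₁ ≤ y₂ := inf_eq_left.1 h
      exact h1.2 (lt_of_le_of_ne h12 hne) h2.lt
    have hlt2 : y₁ ⊓ y₂ < y₂ := by
      refine lt_of_le_of_ne inf_le_right fun h => ?_
      have h12 : y₂ ≤ y₁ := inf_eq_right.1 h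
      exact h2.2 (lt_of_le_of_ne h12 (Ne.symm hne)) h1.lt
    have hltx : y₁ ⊓ y₂ < x := hlt1.trans h1.lt
    refine hltx.ne (H _ _ ?_)
    rw [mu_eq_neg_sum_Ioc_of_ne hltx.ne]
    have hsub : ({x, y₁, y₂} : Finset L) ⊆ Finset.Ioc (y₁ ⊓ y₂) x := by
      intro w hw
      simp only [Finset.mem_insert, Finset.mem_singleton] at hw
      rw [Finset.mem_Ioc]
      rcases hw with rfl | rfl | rfl
      · exact ⟨hltx, le_rfl⟩
      · exact ⟨hlt1, h1.le⟩
      · exact ⟨hlt2, h2.le⟩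
    rw [← Finset.sum_sdiff hsub]
    have hs : ∑ w ∈ ({x, y₁, y₂} : Finset L), mu ℤ w x = -1 := by
      rw [Finset.sum_insert, Finset.sum_pair hne, aux_mu_covBy h1, aux_mu_covBy h2, mu_self]
      · norm_num
      · simp [h1.lt.ne', h2.lt.ne']
    have hr : ∑ w ∈ Finset.Ioc (y₁ ⊓ y₂) x \ {x, y₁, y₂}, mu ℤ w x ≤ 0 := by
      refine Finset.sum_nonpos fun w hw => ?_
      by_contra hc
      have := H w x (not_le.1 hc)
      simp [this] at hw
    omega
end

section
/- Let S = {x_1, …, x_n} be a GCD closed set of positive integers such that in the poset (S, |) of S under divisibility, every element covers at most one element of S. Then for every real number α > 0, the power LCM matrix with ij-entry lcm(x_i, x_j)^α is nonsingular (its determinant is nonzero). -/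
/-- Let `S = {x 0, …, x (n-1)}` be a GCD closed set of positive integers such that in
the divisibility poset `(S, ∣)` every element covers at most one element.  Then for
every real `α > 0` the power LCM matrix `[lcm (x i) (x j) ^ α]` is nonsingular. -/
theorem stmt_15 (n : ℕ) (x : Fin n → ℕ) (hpos : ∀ i, 0 < x i)
    (hinj : Function.Injective x)
    (hgcd : ∀ i j, ∃ k, x k = Nat.gcd (x i) (x j))
    (htree : ∀ i j k : Fin n,
      (x j ∣ x i ∧ x j ≠ x i ∧ ∀ l, x j ∣ x l → x l ∣ x i → x l = x j ∨ x l = x i) →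
      (x k ∣ x i ∧ x k ≠ x i ∧ ∀ l, x k ∣ x l → x l ∣ x i → x l = x k ∨ x l = x i) →
      j = k)
    (α : ℝ) (hα : 0 < α) :
    (Matrix.of fun i j => (Nat.lcm (x i) (x j) : ℝ) ^ α).det ≠ 0 := by
  classical
  have hcov : ∀ i d : Fin n, x d ∣ x i → x d ≠ x i → ∃ q, x d ∣ x q ∧
      (x q ∣ x i ∧ x q ≠ x i ∧ ∀ l, x q ∣ x l → x l ∣ x i → x l = x q ∨ x l = x i) := by
    intro i d h1 h2
    obtain ⟨q, hq, hmax⟩ := Finset.exists_max_image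
      (Finset.univ.filter fun q => x d ∣ x q ∧ x q ∣ x i ∧ x q ≠ x i) x
      ⟨d, by simp [h1, h2]⟩
    simp only [Finset.mem_filter, Finset.mem_univ, true_and] at hq hmax
    refine ⟨q, hq.1, hq.2.1, hq.2.2, fun l hl1 hl2 => ?_⟩
    by_cases h : x l = x i
    · exact Or.inr h
    · left
      exact le_antisymm (hmax l ⟨hq.1.trans hl1, hl2, h⟩) (Nat.le_of_dvd (hpos l) hl1)
  intro hdet
  obtain ⟨v, hv, hMv⟩ := Matrix.exists_mulVec_eq_zero_iff.mpr hdet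
  have hposR : ∀ i, (0 : ℝ) < x i := fun i => by exact_mod_cast hpos i
  have hxα : ∀ i, (x i : ℝ) ^ α ≠ 0 := fun i => (Real.rpow_pos_of_pos (hposR i) α).ne'
  let w : Fin n → ℝ := fun j => (x j : ℝ) ^ α * v j
  let f : ℕ → ℝ := fun m => ((m : ℝ) ^ α)⁻¹
  have hrow : ∀ i, ∑ j, f (Nat.gcd (x i) (x j)) * w j = 0 := by
    intro i
    have h := congrFun hMv i
    simp only [Matrix.mulVec, dotProduct, Matrix.of_apply, Pi.zero_apply] at h
    have h2 : (x i : ℝ) ^ α * ∑ j, f (Nat.gcd (x i) (x j)) * w j = 0 := by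
      rw [← h, Finset.mul_sum]
      refine Finset.sum_congr rfl fun j _ => ?_
      have hg : (0 : ℝ) < (Nat.gcd (x i) (x j) : ℕ) := by
        exact_mod_cast Nat.gcd_pos_of_pos_left _ (hpos i)
      have hgα := (Real.rpow_pos_of_pos hg α).ne'
      have e : ((Nat.gcd (x i) (x j) : ℕ) : ℝ) ^ α * ((Nat.lcm (x i) (x j) : ℕ) : ℝ) ^ α
          = (x i : ℝ) ^ α * (x j : ℝ) ^ α := by
        rw [← Real.mul_rpow (Nat.cast_nonneg _) (Nat.cast_nonneg _),
          ← Real.mul_rpow (Nat.cast_nonneg _) (Nat.cast_nonneg _), ← Nat.cast_mul,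
          Nat.gcd_mul_lcm, Nat.cast_mul]
      simp only [f, w]
      field_simp
      linear_combination (-v j) * e
    exact (mul_eq_zero.mp h2).resolve_left (hxα i)
  have hsum : ∀ i, ∑ j, (if x i ∣ x j then w j else 0) = 0 := by
    intro i
    by_cases hd : ∃ d, x d ∣ x i ∧ x d ≠ x i
    · obtain ⟨d, hd1, hd2⟩ := hd
      obtain ⟨p, -, hp⟩ := hcov i d hd1 hd2
      have hlt : x p < x i := lt_of_le_of_ne (Nat.le_of_dvd (hpos i) hp.1) hp.2.1
      have hc : f (x i) - f (x p) ≠ 0 := by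
        have h1 : (x p : ℝ) ^ α < (x i : ℝ) ^ α :=
          Real.rpow_lt_rpow (hposR p).le (by exact_mod_cast hlt) hα
        intro h0
        have h3 := inv_injective (sub_eq_zero.mp h0)
        exact h1.ne' h3
      have h2 : (f (x i) - f (x p)) * ∑ j, (if x i ∣ x j then w j else 0) = 0 := by
        have h3 : ∑ j, f (Nat.gcd (x i) (x j)) * w j - ∑ j, f (Nat.gcd (x p) (x j)) * w j = 0 := by
          rw [hrow, hrow, sub_zero]
        refine Eq.trans ?_ h3
        rw [Finset.mul_sum, ← Finset.sum_sub_distrib]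
        refine Finset.sum_congr rfl fun j _ => ?_
        by_cases hij : x i ∣ x j
        · rw [if_pos hij, Nat.gcd_eq_left hij, Nat.gcd_eq_left (hp.1.trans hij)]
          ring
        · rw [if_neg hij]
          obtain ⟨k, hk⟩ := hgcd i j
          have hki : x k ∣ x i := hk ▸ Nat.gcd_dvd_left _ _
          have hkj : x k ∣ x j := hk ▸ Nat.gcd_dvd_right _ _
          obtain ⟨q, hq1, hq2⟩ := hcov i k hki (fun h => hij (h ▸ hkj))
          have hqp : q = p := htree i q p hq2 hp
          subst hqp
          have : Nat.gcd (x q) (x j) = Nat.gcd (x i) (x j) :=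
            Nat.dvd_antisymm (Nat.gcd_dvd_gcd_of_dvd_left _ hp.1)
              (hk ▸ Nat.dvd_gcd hq1 hkj)
          rw [this]
          ring
      exact (mul_eq_zero.mp h2).resolve_left hc
    · push Not at hd
      have hall : ∀ j, Nat.gcd (x i) (x j) = x i := by
        intro j
        obtain ⟨k, hk⟩ := hgcd i j
        rw [← hk]
        exact hd k (hk ▸ Nat.gcd_dvd_left _ _)
      have h := hrow i
      simp only [hall] at h
      rw [← Finset.mul_sum] at h
      have h2 := (mul_eq_zero.mp h).resolve_left (inv_ne_zero (hxα i))
      rw [← h2]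
      refine Finset.sum_congr rfl fun j _ => ?_
      rw [if_pos (Nat.gcd_eq_left_iff_dvd.mp (hall j))]
  obtain ⟨a, ha⟩ := Function.ne_iff.mp hv
  obtain ⟨i, hi, hmax⟩ := Finset.exists_max_image
    (Finset.univ.filter fun q => v q ≠ 0) x ⟨a, by simpa using ha⟩
  simp only [Finset.mem_filter, Finset.mem_univ, true_and] at hi hmax
  have h := hsum i
  rw [Finset.sum_eq_single i] at h
  · rw [if_pos dvd_rfl] at h
    exact (mul_ne_zero (hxα i) hi) h
  · intro j _ hji
    split_ifs with hd
    · have : v j = 0 := by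
        by_contra hne
        exact hji (hinj (le_antisymm (hmax j hne) (Nat.le_of_dvd (hpos j) hd)))
      simp [w, this]
    · rfl
  · simp
end

section
/- Let x_1, …, x_n be distinct positive integers such that x_i divides x_n for all i = 1, …, n, and let α be a real number. If the n×n matrix with ij-entry lcm(x_i, x_j)^α has determinant 0, then the n×n matrix with ij-entry lcm(x_n/x_i, x_n/x_j)^α also has determinant 0. -/
lemma lcm_quot_aux (N a b : ℕ) (ha : a ∣ N) (hb : b ∣ N) (h0 : 0 < a) (h1 : 0 < b) :
    a * b * Nat.lcm (N / a) (N / b) = N * Nat.lcm a b := by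
  have e1 : a * (N / a) = N := Nat.mul_div_cancel' ha
  have e2 : b * (N / b) = N := Nat.mul_div_cancel' hb
  rw [← Nat.lcm_mul_left, ← Nat.lcm_mul_left, Nat.lcm_comm (N * a)]
  congr 1
  · calc a * b * (N / a) = (a * (N / a)) * b := by ring
      _ = N * b := by rw [e1]
  · calc a * b * (N / b) = (b * (N / b)) * a := by ring
      _ = N * a := by rw [e2]

/-- If `x 0, …, x (n-1)` are distinct positive integers all dividing the last one
`x (n-1)`, and the power LCM matrix `[lcm (x i) (x j) ^ α]` is singular, then so is the
matrix `[lcm (x (n-1) / x i) (x (n-1) / x j) ^ α]`. -/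
theorem stmt_18 (n : ℕ) (hn : 0 < n) (x : Fin n → ℕ) (hpos : ∀ i, 0 < x i)
    (hinj : Function.Injective x)
    (hdvd : ∀ i, x i ∣ x ⟨n - 1, by omega⟩) (α : ℝ)
    (hdet : (Matrix.of fun i j => (Nat.lcm (x i) (x j) : ℝ) ^ α).det = 0) :
    (Matrix.of fun i j =>
      (Nat.lcm (x ⟨n - 1, by omega⟩ / x i) (x ⟨n - 1, by omega⟩ / x j) : ℝ) ^ α).det = 0 := by
  generalize x ⟨n - 1, by omega⟩ = N at *
  have key : (Matrix.of fun i j => (Nat.lcm (N / x i) (N / x j) : ℝ) ^ α) =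
      Matrix.diagonal (fun i => (N : ℝ) ^ α * ((x i : ℝ) ^ α)⁻¹) *
      (Matrix.of fun i j => (Nat.lcm (x i) (x j) : ℝ) ^ α) *
      Matrix.diagonal (fun i => ((x i : ℝ) ^ α)⁻¹) := by
    ext i j
    rw [Matrix.mul_diagonal, Matrix.diagonal_mul]
    simp only [Matrix.of_apply]
    have hi : (0 : ℝ) < x i := by exact_mod_cast hpos i
    have hj : (0 : ℝ) < x j := by exact_mod_cast hpos j
    have h := congrArg (fun m : ℕ => (m : ℝ) ^ α)
      (lcm_quot_aux N (x i) (x j) (hdvd i) (hdvd j) (hpos i) (hpos j))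
    simp only [Nat.cast_mul] at h
    rw [Real.mul_rpow (by positivity) (by positivity), Real.mul_rpow hi.le hj.le,
      Real.mul_rpow (by positivity) (by positivity)] at h
    have h2 := (Real.rpow_pos_of_pos hi α).ne'
    have h3 := (Real.rpow_pos_of_pos hj α).ne'
    field_simp
    linarith
  rw [key, Matrix.det_mul, Matrix.det_mul, hdet]
  simp
end

section
/- Let q be an odd positive integer with q > 1 and gcd(q, 1020180525) = 1, and let S = {1, 3, 5, 7, 195, 291, 1407, 4025q, 1020180525q}. Then S is a GCD closed set of odd positive integers, and there exists a real number α_0 > 1 such that the 9×9 power LCM matrix with ij-entry lcm(x_i, x_j)^{α_0} is singular (has determinant 0). -/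
/-- The set `{1, 3, 5, 7, 195, 291, 1407, 4025·q, 1020180525·q}` for an odd `q > 1`
coprime to `1020180525`. -/
def hongSetQ (q : ℕ) : Fin 9 → ℕ :=
  ![1, 3, 5, 7, 195, 291, 1407, 4025 * q, 1020180525 * q]

def hongIdx : Fin 9 → Fin 9 → Fin 9 :=
  ![![0, 0, 0, 0, 0, 0, 0, 0, 0],
    ![0, 1, 0, 0, 1, 1, 1, 0, 1],
    ![0, 0, 2, 0, 2, 0, 0, 2, 2],
    ![0, 0, 0, 3, 0, 0, 3, 3, 3],
    ![0, 1, 2, 0, 4, 1, 1, 2, 4],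
    ![0, 1, 0, 0, 1, 5, 1, 0, 5],
    ![0, 1, 0, 3, 1, 1, 6, 3, 6],
    ![0, 0, 2, 3, 2, 0, 3, 7, 7],
    ![0, 1, 2, 3, 4, 5, 6, 7, 8]]

def hongMu : Fin 9 → ℝ := ![-1, 2, 1, 1, -1, -1, -1, -1, 1]

theorem hong_gcd_aux (q a m : ℕ) (hcop : Nat.gcd q 1020180525 = 1) (ha : a ∣ 1020180525) :
    Nat.gcd a (m * q) = Nat.gcd a m := by
  have h : Nat.Coprime q a := Nat.Coprime.coprime_dvd_right ha hcop
  exact Nat.Coprime.gcd_mul_right_cancel_right m h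

theorem hong_gcd (q : ℕ) (hcop : Nat.gcd q 1020180525 = 1) (i j : Fin 9) :
    Nat.gcd (hongSetQ q i) (hongSetQ q j) = hongSetQ q (hongIdx i j) := by
  have key : ∀ a m : ℕ, a ∣ 1020180525 → Nat.gcd a (m * q) = Nat.gcd a m :=
    fun a m ha => hong_gcd_aux q a m hcop ha
  have key2 : ∀ a m : ℕ, a ∣ 1020180525 → Nat.gcd (m * q) a = Nat.gcd a m :=
    fun a m ha => by rw [Nat.gcd_comm]; exact key a m ha
  fin_cases i <;> fin_cases j <;> simp [hongSetQ, hongIdx, Nat.gcd_mul_right] <;>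
    first
    | done
    | (rw [key _ _ (by norm_num)]; done)
    | (rw [key _ _ (by norm_num)]; norm_num; done)
    | (rw [key2 _ _ (by norm_num)]; done)
    | (rw [key2 _ _ (by norm_num)]; norm_num; done)

noncomputable def hongF (q : ℕ) (α : ℝ) : ℝ :=
  ∑ k, hongMu k * (hongSetQ q k : ℝ) ^ (-α)

theorem hong_pos (q : ℕ) (hq : 1 < q) (i : Fin 9) : 0 < hongSetQ q i := by
  fin_cases i <;> simp [hongSetQ] <;> omega

theorem hong_root (q : ℕ) (hq : 1 < q) : ∃ α : ℝ, 1 < α ∧ hongF q α = 0 := by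
  have hcont : Continuous (hongF q) := by
    unfold hongF
    refine continuous_finsetSum _ fun k _ => continuous_const.mul ?_
    have hp : (hongSetQ q k : ℝ) ≠ 0 := by exact_mod_cast (hong_pos q hq k).ne'
    exact (Real.continuous_const_rpow hp).comp continuous_neg
  have hq2 : (2 : ℝ) ≤ q := by exact_mod_cast hq
  have hq0 : (0 : ℝ) < q := by linarith
  have hi : (q : ℝ)⁻¹ ≤ 1 / 2 := by
    rw [one_div]; exact inv_anti₀ (by norm_num) hq2
  have hi0 : 0 < (q : ℝ)⁻¹ := inv_pos.mpr hq0
  have h1 : 0 < hongF q 1 := by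
    simp [hongF, hongMu, hongSetQ, Fin.sum_univ_succ, Real.rpow_neg_one]
    nlinarith
  have h2 : hongF q 2 < 0 := by
    have e : ∀ x : ℕ, (x : ℝ) ^ (-2 : ℝ) = ((x : ℝ) ^ 2)⁻¹ := fun x => by
      rw [Real.rpow_neg (by positivity)]; norm_num
    unfold hongF
    simp only [e]
    simp [hongMu, hongSetQ, Fin.sum_univ_succ, mul_pow]
    have : ((q : ℝ)^2)⁻¹ ≤ 1 := inv_le_one_of_one_le₀ (by nlinarith)
    have : 0 < ((q : ℝ)^2)⁻¹ := by positivity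
    nlinarith
  obtain ⟨α, hα, h0⟩ := intermediate_value_Icc' (by norm_num : (1 : ℝ) ≤ 2)
    hcont.continuousOn ⟨h2.le, h1.le⟩
  refine ⟨α, lt_of_le_of_ne hα.1 ?_, h0⟩
  rintro rfl
  exact h1.ne' h0

theorem hong_row (f : Fin 9 → ℝ) (h : ∑ k, hongMu k * f k = 0) (i : Fin 9) :
    ∑ k, hongMu k * f (hongIdx i k) = 0 := by
  simp only [Fin.sum_univ_succ] at h ⊢
  fin_cases i <;> simp [hongMu, hongIdx] at h ⊢ <;> linarith

/-- For any odd `q > 1` with `gcd (q, 1020180525) = 1`, the set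
`S = {1, 3, 5, 7, 195, 291, 1407, 4025q, 1020180525q}` is a GCD closed set of odd positive
integers, and there is a real `α₀ > 1` such that the power LCM matrix
`[lcm (x i) (x j) ^ α₀]` is singular. -/
theorem stmt_19 (q : ℕ) (hq : 1 < q) (hodd : Odd q) (hcop : Nat.gcd q 1020180525 = 1) :
    (∀ i, Odd (hongSetQ q i)) ∧
    (∀ i, 0 < hongSetQ q i) ∧
    (∀ i j, ∃ k, hongSetQ q k = Nat.gcd (hongSetQ q i) (hongSetQ q j)) ∧
    ∃ α₀ : ℝ, 1 < α₀ ∧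
      (Matrix.of fun i j => (Nat.lcm (hongSetQ q i) (hongSetQ q j) : ℝ) ^ α₀).det = 0 := by
  refine ⟨?_, hong_pos q hq, fun i j => ⟨hongIdx i j, (hong_gcd q hcop i j).symm⟩, ?_⟩
  · intro i
    rw [Nat.odd_iff] at *
    fin_cases i <;> simp [hongSetQ] <;> omega
  obtain ⟨α, hα, h0⟩ := hong_root q hq
  refine ⟨α, hα, ?_⟩
  have hp : ∀ i, (0 : ℝ) < hongSetQ q i := fun i => by exact_mod_cast hong_pos q hq i
  rw [← Matrix.exists_mulVec_eq_zero_iff]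
  refine ⟨fun k => hongMu k * (hongSetQ q k : ℝ) ^ (-α), ?_, ?_⟩
  · intro h
    have := congrFun h 0
    simp [hongMu, hongSetQ] at this
  · funext i
    have hl : ∀ k, (Nat.lcm (hongSetQ q i) (hongSetQ q k) : ℝ) ^ α
        * (hongMu k * (hongSetQ q k : ℝ) ^ (-α))
        = (hongSetQ q i : ℝ) ^ α * (hongMu k * (hongSetQ q (hongIdx i k) : ℝ) ^ (-α)) := by
      intro k
      have hm : (hongSetQ q (hongIdx i k) : ℝ) * (Nat.lcm (hongSetQ q i) (hongSetQ q k) : ℝ)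
          = hongSetQ q i * hongSetQ q k := by
        rw [← hong_gcd q hcop]
        exact_mod_cast Nat.gcd_mul_lcm _ _
      have hm2 := congrArg (fun x : ℝ => x ^ α) hm
      rw [Real.mul_rpow (hp _).le (Nat.cast_nonneg _), Real.mul_rpow (hp _).le (hp _).le] at hm2
      rw [Real.rpow_neg (hp _).le, Real.rpow_neg (hp _).le]
      have a := (Real.rpow_pos_of_pos (hp k) α).ne'
      have b := (Real.rpow_pos_of_pos (hp (hongIdx i k)) α).ne'
      field_simp
      linear_combination hongMu k * hm2
    simp only [Matrix.mulVec, dotProduct, Matrix.of_apply, Pi.zero_apply]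
    rw [Finset.sum_congr rfl fun k _ => hl k, ← Finset.mul_sum,
      hong_row (fun k => (hongSetQ q k : ℝ) ^ (-α)) h0 i, mul_zero]
end
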